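/- arXiv:1207.5077 — 2 statements merged into one kernel-verified Lean document; each statement's English description precedes it below -/
import Mathlib

section
/- Let p ≥ 2 be an integer and η > 0. Let (c_k)_{k≥1} be complex numbers, (φ_k)_{k≥1} real numbers, and γ_k : (0,∞) → ℂ functions such that V(x) = Σ_{k=1}^∞ c_k e^{−iφ_k x} γ_k(x) is real-valued, and assume: τ := sup_k Var(γ_k,(0,∞)) < ∞; ∫_0^∞ (sup_k |γ_k(x)|)^p dx < ∞; Σ_k |c_k| < ∞; Σ_{k_1,…,k_j} |c_{k_1} ⋯ c_{k_j} h_j(η; φ_{k_1},…,φ_{k_j})| < ∞ for j = 1,…,p−1; Kη ≠ ε_1 φ_{k_1} + ⋯ + ε_J φ_{k_J} for all integers 1 ≤ K ≤ J ≤ p, all indices and all signs ε_i ∈ {+1,−1}; and there is an involution k ↦ k* of the index set with c_{k*} = conj(c_k), φ_{k*} = −φ_k and γ_{k*} = conj(γ_k). Let θ : (0,∞) → ℝ be locally absolutely continuous with θ'(x) = (V(x)/η)·(cos(ηx + 2θ(x)) − 1) for almost every x, set β_k(x) = c_k e^{−iφ_k x} γ_k(x), S_{J,0}(x) = Σ_{m_1,…,m_J=1}^∞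 f_{J,0}(η; φ_{m_1},…,φ_{m_J}) β_{m_1}(x) ⋯ β_{m_J}(x), and 𝓔_{J,0} = Σ_{m_1,…,m_J=1}^∞ |c_{m_1} ⋯ c_{m_J} 𝒢_{J,0}(η; φ_{m_1},…,φ_{m_J})|. Then for every J ∈ {2,…,p} and all 0 ≤ a < b < ∞, | Im ∫_a^b S_{J,0}(x) dx | ≤ 𝓔_{J,0} τ^J. -/
open scoped BigOperators ENNReal
open MeasureTheory

/-- The functions `h_J` of `1+J` real variables (extra variables beyond the first `J`
are ignored), defined recursively by `h_0(η) = 1` and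
`h_J(η;φ_1,…,φ_J) = (η - φ_1 - ⋯ - φ_J)⁻¹ Σ_{j=0}^{J-1} h_j(η;φ_1,…,φ_j) h_{J-j-1}(η;φ_{j+1},…,φ_{J-1})`. -/
noncomputable def hFun : ℕ → ℝ → (ℕ → ℝ) → ℝ
  | 0, _, _ => 1
  | (J+1), η, φ =>
      (η - ∑ i ∈ Finset.range (J+1), φ i)⁻¹ *
        ∑ j ∈ (Finset.range (J+1)).attach,
          hFun j.1 η φ * hFun (J - j.1) η (fun i => φ (i + j.1))
  termination_by J _ _ => J
  decreasing_by
  · exact Nat.lt_of_lt_of_le (Finset.mem_range.mp j.2) (Nat.le_refl _)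
  · exact Nat.lt_succ_of_le (Nat.sub_le J j.1)

/-- Pad a tuple `m : Fin J → ℕ` of indices into a function `ℕ → ℝ` listing `φ_{m_1},…,φ_{m_J}`. -/
noncomputable def padFin (J : ℕ) (φ : ℕ → ℝ) (m : Fin J → ℕ) : ℕ → ℝ :=
  fun n => if h : n < J then φ (m ⟨n, h⟩) else 0

/-- ω_a coefficients: ω_0 = -1, ω_{±1} = 1/2, otherwise 0. -/
noncomputable def omegaCoef : ℤ → ℝ := fun a =>
  if a = 0 then -1 else if a = 1 ∨ a = -1 then (1 : ℝ) / 2 else 0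

/-- The functions `f_{J,K}` of `1+J` real variables (extra variables beyond the first `J`
are ignored); `f_{J,K} = 0` unless `1 ≤ J` and `0 ≤ K ≤ J`. For `J ≥ 2`,
`f_{J,K}(η;φ) = η⁻¹ Σ_{a=-1}^{1} ω_a (1/J!) Σ_{σ ∈ S_J} g_{J-1,K+a}(η;φ_{σ(1)},…,φ_{σ(J-1)})`,
where `g_{J,K}(η;φ) = -2K (Kη - φ_1 - ⋯ - φ_J)⁻¹ f_{J,K}(η;φ)` is inlined. -/
noncomputable def fAux : ℕ → ℤ → ℝ → (ℕ → ℝ) → ℝ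
  | 0, _, _, _ => 0
  | 1, K, η, _ => if K = 0 then -η⁻¹ else if K = 1 then η⁻¹ else 0
  | (J+2), K, η, φ =>
      if 0 ≤ K ∧ K ≤ (J : ℤ) + 2 then
        η⁻¹ * ∑ a ∈ ({-1, 0, 1} : Finset ℤ), omegaCoef a *
          ((Nat.factorial (J+2) : ℝ)⁻¹ *
            ∑ σ : Equiv.Perm (Fin (J+2)),
              (fun ψ : ℕ → ℝ =>
                (-2 * ((K + a : ℤ) : ℝ)) /
                    (((K + a : ℤ) : ℝ) * η - ∑ i ∈ Finset.range (J+1), ψ i) *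
                  fAux (J+1) (K+a) η ψ)
              (fun i => if h : i < J+2 then φ (σ ⟨i, h⟩) else φ i))
      else 0

/-- The functions `g_{J,K} = -2K (Kη - φ_1 - ⋯ - φ_J)⁻¹ f_{J,K}`. -/
noncomputable def gAux (J : ℕ) (K : ℤ) (η : ℝ) (φ : ℕ → ℝ) : ℝ :=
  (-2 * (K : ℝ)) / ((K : ℝ) * η - ∑ i ∈ Finset.range J, φ i) * fAux J K η φ

/-- Symmetric product `p ⊙ q` of a function of `1+I` variables and one of `1+J` variables. -/
noncomputable def symProd (I J : ℕ) (p q : ℝ → (ℕ → ℝ) → ℝ) (η : ℝ) (φ : ℕ → ℝ) : ℝ :=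
  (Nat.factorial (I + J) : ℝ)⁻¹ *
    ∑ σ : Equiv.Perm (Fin (I + J)),
      p η (fun i => if h : i < I + J then φ (σ ⟨i, h⟩) else φ i) *
      q η (fun i => if h : i + I < I + J then φ (σ ⟨i + I, h⟩) else φ (i + I))

/-- `𝒢_{J,0} = Σ_{j=1}^{J-1} Σ_{k=1}^{min(j,J-j)} (1/(4k)) g_{j,k} ⊙ ğ_{J-j,k}`, where
`ğ_{J,K}(η;φ_1,…,φ_J) = g_{J,K}(η;-φ_1,…,-φ_J)`. -/
noncomputable def GFun (J : ℕ) (η : ℝ) (φ : ℕ → ℝ) : ℝ :=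
  ∑ j ∈ Finset.Icc 1 (J - 1), ∑ k ∈ Finset.Icc 1 (min j (J - j)),
    (1 / (4 * (k : ℝ))) *
      symProd j (J - j) (fun η' ψ => gAux j (k : ℤ) η' ψ)
        (fun η' ψ => gAux (J - j) (k : ℤ) η' (fun i => -ψ i)) η φ

/-- `𝓔_{J,0} = Σ_{m_1,…,m_J} |c_{m_1} ⋯ c_{m_J} 𝒢_{J,0}(η;φ_{m_1},…,φ_{m_J})| ∈ [0,∞]`. -/
noncomputable def calEFun (η : ℝ) (c : ℕ → ℂ) (φ : ℕ → ℝ) (J : ℕ) : ℝ≥0∞ :=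
  ∑' m : Fin J → ℕ,
    (‖∏ i, c (m i)‖₊ : ℝ≥0∞) * (‖GFun J η (padFin J φ m)‖₊ : ℝ≥0∞)

/-- `S_{J,0}(x) = Σ_{m_1,…,m_J} f_{J,0}(η;φ_{m_1},…,φ_{m_J}) β_{m_1}(x) ⋯ β_{m_J}(x)`
with `β_k(x) = c_k e^{-iφ_k x} γ_k(x)`. -/
noncomputable def SFun0 (η : ℝ) (c : ℕ → ℂ) (φ : ℕ → ℝ) (γ : ℕ → ℝ → ℂ)
    (J : ℕ) (x : ℝ) : ℂ :=
  ∑' m : Fin J → ℕ,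
    (fAux J 0 η (padFin J φ m) : ℂ) *
      ∏ i, (c (m i) * Complex.exp (-Complex.I * φ (m i) * x) * γ (m i) x)

/-- Extend a tuple by zero to an infinite sequence. -/
noncomputable def zeroExtend {J : ℕ} (w : Fin J → ℝ) : ℕ → ℝ :=
  fun i => if h : i < J then w ⟨i, h⟩ else 0

lemma zeroExtend_of_lt {J : ℕ} (w : Fin J → ℝ) {i : ℕ} (h : i < J) :
    zeroExtend w i = w ⟨i, h⟩ := dif_pos h

lemma zeroExtend_of_le {J : ℕ} (w : Fin J → ℝ) {i : ℕ} (h : J ≤ i) :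
    zeroExtend w i = 0 := dif_neg h.not_gt

lemma zeroExtend_neg {J : ℕ} (w : Fin J → ℝ) :
    zeroExtend (-w) = fun i => -zeroExtend w i := by
  funext i
  by_cases h : i < J <;> simp [zeroExtend, h]

lemma sum_range_zeroExtend {J : ℕ} (w : Fin J → ℝ) :
    ∑ i ∈ Finset.range J, zeroExtend w i = ∑ i, w i := by
  rw [Finset.sum_range]
  exact Finset.sum_congr rfl fun i _ => zeroExtend_of_lt w i.2

/-- Permute the first `J` entries of a sequence. -/
noncomputable def permuteFirst {J : ℕ} (σ : Equiv.Perm (Fin J)) (w : ℕ → ℝ) : ℕ → ℝ :=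
  fun i => if h : i < J then w (σ ⟨i, h⟩) else w i

lemma permuteFirst_zeroExtend {J : ℕ} (σ : Equiv.Perm (Fin J)) (w : Fin J → ℝ) :
    permuteFirst σ (zeroExtend w) = zeroExtend (w ∘ σ) := by
  funext i
  by_cases h : i < J <;> simp [permuteFirst, zeroExtend, h]

/-! ### Dependence on finitely many variables -/

lemma dependsOn_sum_range (J : ℕ) :
    DependsOn (fun w : ℕ → ℝ => ∑ i ∈ Finset.range J, w i) (Set.Iio J) := fun _ _ h =>
  Finset.sum_congr rfl fun i hi => h i (Finset.mem_range.mp hi)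

lemma dependsOn_fAux (J : ℕ) (K : ℤ) (η : ℝ) : DependsOn (fAux J K η) (Set.Iio J) := by
  match J with
  | 0 => intro v w h; simp [fAux]
  | 1 => intro v w h; simp [fAux]
  | J + 2 =>
    intro v w h
    have key : ∀ σ : Equiv.Perm (Fin (J + 2)), ∀ i ∈ Set.Iio (J + 1),
        (if h : i < J + 2 then v (σ ⟨i, h⟩) else v i) =
          (if h : i < J + 2 then w (σ ⟨i, h⟩) else w i) := by
      intro σ i hi
      have hi' : i < J + 2 := lt_trans hi (Nat.lt_succ_self _)
      simp only [dif_pos hi']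
      exact h _ (σ ⟨i, hi'⟩).2
    simp only [fAux]
    split_ifs with hK
    · congr 1
      refine Finset.sum_congr rfl fun a _ => ?_
      congr 2
      refine Finset.sum_congr rfl fun σ _ => ?_
      have h1 := dependsOn_fAux (J + 1) (K + a) η (key σ)
      have h2 := dependsOn_sum_range (J + 1) (key σ)
      dsimp only at h2
      rw [h1, h2]
    · rfl

lemma dependsOn_gAux (J : ℕ) (K : ℤ) (η : ℝ) : DependsOn (gAux J K η) (Set.Iio J) := by
  intro v w h
  have h2 := dependsOn_sum_range J h
  dsimp only at h2
  rw [gAux, gAux, dependsOn_fAux J K η h, h2]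

lemma dependsOn_hFun (J : ℕ) (η : ℝ) : DependsOn (hFun J η) (Set.Iio J) := by
  induction J using Nat.strong_induction_on with
  | _ J ih =>
    match J with
    | 0 => intro v w h; simp [hFun]
    | J + 1 =>
      intro v w h
      have h2 := dependsOn_sum_range (J + 1) h
      dsimp only at h2
      rw [hFun, hFun, h2]
      congr 1
      refine Finset.sum_congr rfl fun j _ => ?_
      have hj : j.1 < J + 1 := Finset.mem_range.mp j.2
      rw [ih j.1 hj (fun i hi => h i (lt_trans hi hj)),
        ih (J - j.1) (by omega) (x := fun i => v (i + j.1)) (y := fun i => w (i + j.1))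
          (fun i hi => h _ (by simp only [Set.mem_Iio] at hi ⊢; omega))]

lemma fAux_eq_zero_of_lt (J : ℕ) {K : ℤ} (η : ℝ) (w : ℕ → ℝ) (h : (J : ℤ) < K) :
    fAux J K η w = 0 := by
  match J with
  | 0 => simp [fAux]
  | 1 =>
    push_cast at h
    rw [fAux, if_neg (by omega), if_neg (by omega)]
  | J + 2 =>
    push_cast at h
    rw [fAux, if_neg (by omega)]

lemma gAux_eq_zero_of_lt (J : ℕ) {K : ℤ} (η : ℝ) (w : ℕ → ℝ) (h : (J : ℤ) < K) :
    gAux J K η w = 0 := by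
  rw [gAux, fAux_eq_zero_of_lt J η w h, mul_zero]

lemma gAux_zero_right (J : ℕ) (η : ℝ) (w : ℕ → ℝ) : gAux J 0 η w = 0 := by
  simp [gAux]

lemma fAux_neg_one (J : ℕ) (η : ℝ) (w : ℕ → ℝ) : fAux J (-1) η w = 0 := by
  match J with
  | 0 => simp [fAux]
  | 1 => simp [fAux]
  | J + 2 => rw [fAux, if_neg (by omega)]

lemma gAux_neg_one (J : ℕ) (η : ℝ) (w : ℕ → ℝ) : gAux J (-1) η w = 0 := by
  rw [gAux, fAux_neg_one, mul_zero]

lemma fAux_add_two (J K : ℕ) (η : ℝ) (w : ℕ → ℝ) (hK : K ≤ J + 2) :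
    fAux (J + 2) K η w = η⁻¹ * ∑ a ∈ ({-1, 0, 1} : Finset ℤ), omegaCoef a *
      ((Nat.factorial (J + 2) : ℝ)⁻¹ *
        ∑ σ : Equiv.Perm (Fin (J + 2)), gAux (J + 1) (K + a) η (permuteFirst σ w)) := by
  rw [fAux, if_pos (by omega)]
  rfl

lemma fAux_add_two_of_pos (J K : ℕ) (η : ℝ) (w : ℕ → ℝ) :
    fAux (J + 2) (K + 1 : ℕ) η w = (Nat.factorial (J + 2) : ℝ)⁻¹ *
        ∑ σ : Equiv.Perm (Fin (J + 2)), η⁻¹ * (1 / 2 * gAux (J + 1) K η (permuteFirst σ w)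
          - gAux (J + 1) (K + 1 : ℕ) η (permuteFirst σ w)
          + 1 / 2 * gAux (J + 1) (K + 2 : ℕ) η (permuteFirst σ w)) := by
  by_cases hK : K + 1 ≤ J + 2
  · rw [fAux_add_two J (K + 1) η w hK]
    simp only [omegaCoef, ← Finset.mul_sum, Finset.sum_add_distrib, Finset.sum_sub_distrib]
    have e1 : ((K + 1 : ℕ) : ℤ) + -1 = K := by push_cast; ring
    have e2 : ((K + 1 : ℕ) : ℤ) + 1 = (K + 2 : ℕ) := by push_cast; ring
    rw [Finset.sum_insert (by decide), Finset.sum_insert (by decide), Finset.sum_singleton,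
      e1, e2, add_zero]
    norm_num
    ring
  · rw [fAux_eq_zero_of_lt _ _ _ (by push_cast; omega)]
    simp (disch := push_cast; omega) only [gAux_eq_zero_of_lt]
    simp

lemma fAux_add_two_zero (J : ℕ) (η : ℝ) (w : ℕ → ℝ) :
    fAux (J + 2) 0 η w = (Nat.factorial (J + 2) : ℝ)⁻¹ *
        ∑ σ : Equiv.Perm (Fin (J + 2)), η⁻¹ * (1 / 2 * gAux (J + 1) 1 η (permuteFirst σ w)) := by
  have := fAux_add_two J 0 η w (by omega)
  rw [Nat.cast_zero] at this
  rw [this]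
  simp only [omegaCoef, ← Finset.mul_sum]
  simp [gAux_zero_right, gAux_neg_one]
  ring

lemma symProd_eq (I J : ℕ) (p q : ℝ → (ℕ → ℝ) → ℝ) (η : ℝ) (w : ℕ → ℝ) :
    symProd I J p q η w = (Nat.factorial (I + J) : ℝ)⁻¹ *
      ∑ σ : Equiv.Perm (Fin (I + J)), p η (permuteFirst σ w) *
        q η (fun i => permuteFirst σ w (i + I)) := rfl

/-! ### Generating polynomials -/

section GeneratingPolynomials

open MvPolynomial

variable {n : ℕ}

/-- The generating polynomial of the values of a function of `J` variables along tuples of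
entries of `ψ`. -/
noncomputable def genPoly (ψ : Fin n → ℝ) (J : ℕ) (p : (ℕ → ℝ) → ℝ) : MvPolynomial (Fin n) ℝ :=
  ∑ m : Fin J → Fin n, C (p (zeroExtend (ψ ∘ m))) * ∏ i, X (m i)

lemma genPoly_congr (ψ : Fin n → ℝ) (J : ℕ) {p q : (ℕ → ℝ) → ℝ}
    (h : ∀ m : Fin J → Fin n, p (zeroExtend (ψ ∘ m)) = q (zeroExtend (ψ ∘ m))) :
    genPoly ψ J p = genPoly ψ J q :=
  Finset.sum_congr rfl fun m _ => by rw [h m]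

lemma genPoly_add (ψ : Fin n → ℝ) (J : ℕ) (p q : (ℕ → ℝ) → ℝ) :
    genPoly ψ J (fun w => p w + q w) = genPoly ψ J p + genPoly ψ J q := by
  simp only [genPoly, C_add, add_mul, Finset.sum_add_distrib]

lemma genPoly_sub (ψ : Fin n → ℝ) (J : ℕ) (p q : (ℕ → ℝ) → ℝ) :
    genPoly ψ J (fun w => p w - q w) = genPoly ψ J p - genPoly ψ J q := by
  simp only [genPoly, C_sub, sub_mul, Finset.sum_sub_distrib]

lemma genPoly_smul (ψ : Fin n → ℝ) (J : ℕ) (r : ℝ) (p : (ℕ → ℝ) → ℝ) :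
    genPoly ψ J (fun w => r * p w) = C r * genPoly ψ J p := by
  simp only [genPoly, C_mul, mul_assoc, Finset.mul_sum]

lemma genPoly_sum {ι : Type*} (ψ : Fin n → ℝ) (J : ℕ) (s : Finset ι) (p : ι → (ℕ → ℝ) → ℝ) :
    genPoly ψ J (fun w => ∑ a ∈ s, p a w) = ∑ a ∈ s, genPoly ψ J (p a) := by
  simp only [genPoly, map_sum, Finset.sum_mul]
  exact Finset.sum_comm

lemma genPoly_neg_apply (ψ : Fin n → ℝ) (J : ℕ) (p : (ℕ → ℝ) → ℝ) :
    genPoly ψ J (fun w => p (fun i => -w i)) = genPoly (-ψ) J p := by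
  refine Finset.sum_congr rfl fun m _ => ?_
  dsimp only
  rw [← zeroExtend_neg]
  rfl

lemma genPoly_symmetrize (ψ : Fin n → ℝ) (J : ℕ) (p : (ℕ → ℝ) → ℝ) :
    genPoly ψ J (fun w => (Nat.factorial J : ℝ)⁻¹ *
      ∑ σ : Equiv.Perm (Fin J), p (permuteFirst σ w)) = genPoly ψ J p := by
  have h : ∀ σ : Equiv.Perm (Fin J),
      genPoly ψ J (fun w => p (permuteFirst σ w)) = genPoly ψ J p := by
    intro σ
    refine Fintype.sum_equiv (Equiv.arrowCongr σ.symm (Equiv.refl _)) _ _ fun m => ?_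
    dsimp only
    rw [permuteFirst_zeroExtend]
    congr 1
    exact (Equiv.prod_comp σ (fun i => X (m i))).symm
  rw [genPoly_smul, genPoly_sum, Finset.sum_congr rfl fun σ _ => h σ, Finset.sum_const,
    Finset.card_univ, Fintype.card_perm, Fintype.card_fin, nsmul_eq_mul, ← mul_assoc,
    ← map_natCast C, ← C_mul, inv_mul_cancel₀ (by positivity), C_1, one_mul]

lemma genPoly_mul (ψ : Fin n → ℝ) (I J : ℕ) {p q : (ℕ → ℝ) → ℝ} (hp : DependsOn p (Set.Iio I)) :
    genPoly ψ (I + J) (fun w => p w * q (fun i => w (i + I))) =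
      genPoly ψ I p * genPoly ψ J q := by
  rw [genPoly, genPoly, genPoly, Finset.sum_mul_sum, ← Finset.sum_product',
    Finset.univ_product_univ]
  refine (Fintype.sum_equiv (Fin.appendEquiv I J) _ _ fun m => ?_).symm
  have h1 : p (zeroExtend (ψ ∘ Fin.append m.1 m.2)) = p (zeroExtend (ψ ∘ m.1)) := by
    refine hp fun i (hi : i < I) => ?_
    rw [zeroExtend_of_lt _ hi, zeroExtend_of_lt _ (hi.trans_le (Nat.le_add_right _ _))]
    exact congrArg ψ (Fin.append_left m.1 m.2 ⟨i, hi⟩)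
  have h2 : (fun i => zeroExtend (ψ ∘ Fin.append m.1 m.2) (i + I)) = zeroExtend (ψ ∘ m.2) := by
    funext i
    by_cases hi : i < J
    · rw [zeroExtend_of_lt _ hi, zeroExtend_of_lt _ (by omega : i + I < I + J)]
      have : (⟨i + I, by omega⟩ : Fin (I + J)) = Fin.natAdd I ⟨i, hi⟩ :=
        Fin.ext (by simp [add_comm])
      rw [this]
      exact congrArg ψ (Fin.append_right m.1 m.2 ⟨i, hi⟩)
    · rw [zeroExtend_of_le _ (by omega), zeroExtend_of_le _ (by omega)]
  simp only [Fin.appendEquiv, Equiv.coe_fn_mk, h1, h2, Fin.prod_univ_add, Fin.append_left,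
    Fin.append_right, C_mul]
  ring

lemma genPoly_symProd (ψ : Fin n → ℝ) {I L J : ℕ} (h : I + L = J) (p q : ℝ → (ℕ → ℝ) → ℝ)
    (η : ℝ) (hp : DependsOn (p η) (Set.Iio I)) :
    genPoly ψ J (symProd I L p q η) = genPoly ψ I (p η) * genPoly ψ L (q η) := by
  subst h
  rw [← genPoly_mul ψ I L hp, ← genPoly_symmetrize ψ (I + L) fun w => p η w * q η fun i => w (i + I)]
  rfl

lemma genPoly_zero (ψ : Fin n → ℝ) (p : (ℕ → ℝ) → ℝ) : genPoly ψ 0 p = C (p 0) := by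
  have : ∀ m : Fin 0 → Fin n, zeroExtend (ψ ∘ m) = 0 := fun m => by
    funext i; exact zeroExtend_of_le _ (Nat.zero_le _)
  simp [genPoly, this]

lemma genPoly_one_const (ψ : Fin n → ℝ) (r : ℝ) :
    genPoly ψ 1 (fun _ => r) = C r * ∑ i, X i := by
  rw [genPoly, ← Finset.mul_sum]
  congr 1
  refine Fintype.sum_equiv (Equiv.funUnique (Fin 1) (Fin n)) _ _ fun m => ?_
  simp

lemma genPoly_succ (ψ : Fin n → ℝ) (J : ℕ) {p : (ℕ → ℝ) → ℝ} (hp : DependsOn p (Set.Iio J)) :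
    genPoly ψ (J + 1) p = genPoly ψ J p * ∑ i, X i := by
  have := genPoly_mul ψ J 1 (q := fun _ => 1) hp
  simpa [genPoly_one_const] using this

lemma genPoly_isHomogeneous (ψ : Fin n → ℝ) (J : ℕ) (p : (ℕ → ℝ) → ℝ) :
    (genPoly ψ J p).IsHomogeneous J := by
  refine IsHomogeneous.sum _ _ _ fun m _ => ?_
  have := (isHomogeneous_C (Fin n) (p (zeroExtend (ψ ∘ m)))).mul
    (IsHomogeneous.prod Finset.univ (fun i => (X (m i) : MvPolynomial (Fin n) ℝ)) (fun _ => 1)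
      fun i _ => isHomogeneous_X ℝ (m i))
  simpa using this

lemma sum_perm_eq_zero_of_genPoly_eq_zero {ψ : Fin n → ℝ} {p : (ℕ → ℝ) → ℝ}
    (h : genPoly ψ n p = 0) :
    ∑ σ : Equiv.Perm (Fin n), p (zeroExtend (ψ ∘ σ)) = 0 := by
  set d : Fin n →₀ ℕ := Finsupp.equivFunOnFinite.symm fun _ => 1 with hd
  have hmon : ∀ m : Fin n → Fin n, (∏ i, X (m i) : MvPolynomial (Fin n) ℝ) =
      monomial (∑ i, Finsupp.single (m i) 1) 1 := by
    intro m
    rw [monomial_sum_one]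
    rfl
  have hc : ∀ m : Fin n → Fin n, coeff d (C (p (zeroExtend (ψ ∘ m))) * ∏ i, X (m i)) =
      if Function.Bijective m then p (zeroExtend (ψ ∘ m)) else 0 := by
    intro m
    rw [coeff_C_mul, hmon, coeff_monomial]
    have : (∑ i, Finsupp.single (m i) 1 = d) ↔ Function.Bijective m := by
      constructor
      · intro hm
        refine Finite.surjective_iff_bijective.mp fun j => ?_
        by_contra hj
        push Not at hj
        have := DFunLike.congr_fun hm j
        simp [hd, Finsupp.finsetSum_apply, hj] at this
      · intro hm
        ext j
        rw [Finsupp.finsetSum_apply]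
        refine ((Equiv.ofBijective m hm).sum_comp
          (fun k => (Finsupp.single k 1 : Fin n →₀ ℕ) j)).trans ?_
        simp [hd, Finsupp.single_apply]
    simp [this]
  have h0 := congrArg (coeff d) h
  rw [genPoly, coeff_sum, coeff_zero, Finset.sum_congr rfl fun m _ => hc m, ← Finset.sum_filter]
    at h0
  rw [← h0]
  refine Finset.sum_bij (fun σ _ => ⇑σ) (fun σ _ => ?_) (fun σ _ τ _ => ?_) (fun m hm => ?_)
    (fun σ _ => rfl)
  · exact Finset.mem_filter.mpr ⟨Finset.mem_univ _, σ.bijective⟩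
  · exact fun hστ => DFunLike.coe_injective hστ
  · exact ⟨Equiv.ofBijective m (Finset.mem_filter.mp hm).2, Finset.mem_univ _, rfl⟩

/-- The derivation scaling the variable `X i` by `ψ i`. -/
noncomputable def weightDeriv (ψ : Fin n → ℝ) :
    Derivation ℝ (MvPolynomial (Fin n) ℝ) (MvPolynomial (Fin n) ℝ) :=
  mkDerivation ℝ fun i => C (ψ i) * X i

lemma weightDeriv_neg (ψ : Fin n → ℝ) : weightDeriv (-ψ) = -weightDeriv ψ := by
  refine derivation_ext fun i => ?_
  simp [weightDeriv, mkDerivation_X]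

lemma weightDeriv_prod_X {ι : Type*} (ψ : Fin n → ℝ) (s : Finset ι) (m : ι → Fin n) :
    weightDeriv ψ (∏ i ∈ s, X (m i)) = C (∑ i ∈ s, ψ (m i)) * ∏ i ∈ s, X (m i) := by
  classical
  induction s using Finset.induction_on with
  | empty => simp
  | insert a s ha ih =>
    rw [Finset.prod_insert ha, Finset.sum_insert ha, Derivation.leibniz, ih, weightDeriv,
      mkDerivation_X]
    simp only [smul_eq_mul, C_add]
    ring

lemma weightDeriv_genPoly (ψ : Fin n → ℝ) (J : ℕ) (p : (ℕ → ℝ) → ℝ) :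
    weightDeriv ψ (genPoly ψ J p) =
      genPoly ψ J (fun w => (∑ i ∈ Finset.range J, w i) * p w) := by
  rw [genPoly, map_sum]
  refine Finset.sum_congr rfl fun m _ => ?_
  rw [Derivation.leibniz, weightDeriv_prod_X, derivation_C, smul_zero, add_zero,
    smul_eq_mul]
  dsimp only
  rw [sum_range_zeroExtend, C_mul]
  simp only [Function.comp_apply]
  ring

lemma weightDeriv_monomial (ψ : Fin n → ℝ) (d : Fin n →₀ ℕ) (r : ℝ) :
    weightDeriv ψ (monomial d r) = C (∑ i, d i * ψ i) * monomial d r := by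
  rw [weightDeriv, mkDerivation_monomial, Finsupp.sum_fintype _ _ (by simp), map_sum,
    Finset.smul_sum, Finset.sum_mul]
  refine Finset.sum_congr rfl fun i _ => ?_
  by_cases hi : d i = 0
  · simp [hi]
  · have : d - Finsupp.single i 1 + Finsupp.single i 1 = d :=
      tsub_add_cancel_of_le (Finsupp.single_le_iff.mpr (Nat.one_le_iff_ne_zero.mpr hi))
    rw [smul_eq_mul, mul_left_comm, X, monomial_mul, this, C_mul_monomial, C_mul_monomial,
      smul_monomial]
    congr 1
    simp only [smul_eq_mul]
    ring

lemma coeff_weightDeriv (ψ : Fin n → ℝ) (d : Fin n →₀ ℕ) (P : MvPolynomial (Fin n) ℝ) :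
    coeff d (weightDeriv ψ P) = (∑ i, d i * ψ i) * coeff d P := by
  induction P using MvPolynomial.induction_on' with
  | monomial e r =>
    rw [weightDeriv_monomial, coeff_C_mul, coeff_monomial]
    split_ifs with h
    · rw [h]
    · simp
  | add P Q hP hQ => rw [map_add, coeff_add, hP, hQ, coeff_add, mul_add]

/-! ### Non-resonance and the two recursions -/

/-- No multiple `K * η` with `1 ≤ K ≤ J ≤ p` is a sum of `J` entries of `ψ`. -/
def NonResonant (η : ℝ) (p : ℕ) (ψ : Fin n → ℝ) : Prop :=
  ∀ K J : ℕ, 1 ≤ K → K ≤ J → J ≤ p → ∀ m : Fin J → Fin n, (K : ℝ) * η ≠ ∑ i, ψ (m i)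

lemma NonResonant.eq_zero_of_weightDeriv_eq {η : ℝ} {p : ℕ} {ψ : Fin n → ℝ}
    (hψ : NonResonant η p ψ) {K J : ℕ} (hK : 1 ≤ K) (hKJ : K ≤ J) (hJ : J ≤ p)
    {P : MvPolynomial (Fin n) ℝ} (hP : P.IsHomogeneous J)
    (h : C (K * η) * P = weightDeriv ψ P) : P = 0 := by
  ext d
  rw [coeff_zero]
  by_cases hd : Finsupp.degree d = J
  · have hc := congrArg (coeff d) h
    rw [coeff_C_mul, coeff_weightDeriv] at hc
    by_contra h0
    have hres := mul_right_cancel₀ h0 hc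
    have hlen : (Finsupp.toMultiset d).toList.length = J := by
      rw [Multiset.length_toList, Finsupp.card_toMultiset, ← hd]
      rfl
    refine hψ K J hK hKJ hJ (fun i => (Finsupp.toMultiset d).toList.get (i.cast hlen.symm)) ?_
    rw [hres]
    have h1 : ∑ i : Fin J, ψ ((Finsupp.toMultiset d).toList.get (i.cast hlen.symm)) =
        ((Finsupp.toMultiset d).map ψ).sum := by
      subst hlen
      conv_rhs => rw [← Multiset.coe_toList (Finsupp.toMultiset d), Multiset.map_coe,
        Multiset.sum_coe, ← List.ofFn_getElem_eq_map, List.sum_ofFn]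
      rfl
    rw [h1, Finsupp.toMultiset_map, Finsupp.sum_toMultiset,
      Finsupp.sum_mapDomain_index (by simp) (fun _ _ _ => by ring),
      Finsupp.sum_fintype _ _ (by simp)]
    simp only [nsmul_eq_mul]
  · exact hP.coeff_eq_zero hd

lemma NonResonant.weightDeriv_genPoly_gAux {η : ℝ} {p : ℕ} {ψ : Fin n → ℝ}
    (hψ : NonResonant η p ψ) {K J : ℕ} (hK : 1 ≤ K) (hJ : J ≤ p) :
    weightDeriv ψ (genPoly ψ J (gAux J K η)) =
      C ((K : ℝ) * η) * genPoly ψ J (gAux J K η) + C (2 * (K : ℝ)) * genPoly ψ J (fAux J K η) := by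
  rw [weightDeriv_genPoly, ← genPoly_smul, ← genPoly_smul, ← genPoly_add]
  refine genPoly_congr _ _ fun m => ?_
  rcases le_or_gt K J with hKJ | hKJ
  · have h0 := sub_ne_zero.mpr (hψ K J hK hKJ hJ m)
    have hs := sum_range_zeroExtend (ψ ∘ m)
    simp only [Function.comp_apply] at hs
    rw [gAux, hs]
    push_cast
    field_simp
    ring
  · rw [gAux_eq_zero_of_lt _ _ _ (by exact_mod_cast hKJ),
      fAux_eq_zero_of_lt _ _ _ (by exact_mod_cast hKJ)]
    ring

/-- The generating series of the `g_{J,K}` over `J`, normalized to `2` for `K = 0`. -/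
noncomputable def gSeries (ψ : Fin n → ℝ) (η : ℝ) (K : ℕ) :
    PowerSeries (MvPolynomial (Fin n) ℝ) :=
  if K = 0 then 2 else PowerSeries.mk fun J => genPoly ψ J (gAux J K η)

/-- The generating series of the `f_{J,K}` over `J`. -/
noncomputable def fSeries (ψ : Fin n → ℝ) (η : ℝ) (K : ℕ) :
    PowerSeries (MvPolynomial (Fin n) ℝ) :=
  PowerSeries.mk fun J => genPoly ψ J (fAux J K η)

lemma genPoly_fun_zero (ψ : Fin n → ℝ) (J : ℕ) : genPoly ψ J (fun _ => 0) = 0 := by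
  simp [genPoly]

lemma coeff_fSeries (ψ : Fin n → ℝ) (η : ℝ) (K J : ℕ) :
    PowerSeries.coeff J (fSeries ψ η K) = genPoly ψ J (fAux J K η) :=
  PowerSeries.coeff_mk _ _

lemma gSeries_zero (ψ : Fin n → ℝ) (η : ℝ) : gSeries ψ η 0 = 2 := if_pos rfl

lemma coeff_two_succ (J : ℕ) :
    PowerSeries.coeff (J + 1) (2 : PowerSeries (MvPolynomial (Fin n) ℝ)) = 0 := by
  have : (2 : PowerSeries (MvPolynomial (Fin n) ℝ)) = PowerSeries.C 2 := (map_ofNat _ 2).symm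
  rw [this, PowerSeries.coeff_C, if_neg (Nat.succ_ne_zero J)]

lemma coeff_gSeries_of_ne_zero (ψ : Fin n → ℝ) (η : ℝ) {K : ℕ} (hK : K ≠ 0) (J : ℕ) :
    PowerSeries.coeff J (gSeries ψ η K) = genPoly ψ J (gAux J K η) := by
  rw [gSeries, if_neg hK, PowerSeries.coeff_mk]

lemma coeff_gSeries_succ (ψ : Fin n → ℝ) (η : ℝ) (K J : ℕ) :
    PowerSeries.coeff (J + 1) (gSeries ψ η K) = genPoly ψ (J + 1) (gAux (J + 1) K η) := by
  rcases eq_or_ne K 0 with rfl | hK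
  · rw [gSeries_zero, coeff_two_succ, ← genPoly_fun_zero ψ (J + 1)]
    exact genPoly_congr _ _ fun m => (gAux_zero_right _ _ _).symm
  · exact coeff_gSeries_of_ne_zero ψ η hK _

lemma coeff_gSeries_of_lt (ψ : Fin n → ℝ) (η : ℝ) {K J : ℕ} (h : J < K) :
    PowerSeries.coeff J (gSeries ψ η K) = 0 := by
  rw [coeff_gSeries_of_ne_zero ψ η (by omega), ← genPoly_fun_zero ψ J]
  exact genPoly_congr _ _ fun m => gAux_eq_zero_of_lt _ _ _ (by exact_mod_cast h)

lemma coeff_zero_gSeries (ψ : Fin n → ℝ) (η : ℝ) (K : ℕ) :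
    PowerSeries.coeff 0 (gSeries ψ η K) = if K = 0 then 2 else 0 := by
  split_ifs with hK
  · rw [hK, gSeries_zero]
    rw [PowerSeries.coeff_zero_eq_constantCoeff_apply, map_ofNat]
  · exact coeff_gSeries_of_lt ψ η (Nat.pos_of_ne_zero hK)

/-- The generating polynomial of the constant `η⁻¹`, viewed as a function of one variable. -/
noncomputable def invLinear (n : ℕ) (η : ℝ) : MvPolynomial (Fin n) ℝ := C η⁻¹ * ∑ i, X i

lemma coeff_succ_fSeries_succ (ψ : Fin n → ℝ) (η : ℝ) (K J : ℕ) :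
    PowerSeries.coeff (J + 1) (fSeries ψ η (K + 1)) =
      invLinear n η * (C (1 / 2) * PowerSeries.coeff J (gSeries ψ η K)
        - PowerSeries.coeff J (gSeries ψ η (K + 1))
        + C (1 / 2) * PowerSeries.coeff J (gSeries ψ η (K + 2))) := by
  rw [coeff_fSeries]
  rcases J with _ | J
  · simp only [coeff_zero_gSeries, Nat.add_eq_zero_iff, one_ne_zero, and_false, if_false,
      OfNat.ofNat_ne_zero]
    have h : ∀ w : ℕ → ℝ, fAux 1 (K + 1 : ℕ) η w = if K = 0 then η⁻¹ else 0 := fun w => by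
      rw [fAux, if_neg (by push_cast; omega)]
      push_cast
      simp
    rw [genPoly_congr ψ (0 + 1) (q := fun _ => if K = 0 then η⁻¹ else 0) fun m => h _,
      genPoly_one_const, invLinear]
    split_ifs
    · have : (2 : MvPolynomial (Fin n) ℝ) = C 2 := (map_ofNat C 2).symm
      rw [this, ← C_mul]
      norm_num
    · simp
  · rw [coeff_gSeries_succ, coeff_gSeries_succ, coeff_gSeries_succ]
    change genPoly ψ (J + 2) (fAux (J + 2) (K + 1 : ℕ) η) = _
    rw [funext (fAux_add_two_of_pos J K η),
      genPoly_symmetrize ψ (J + 2) fun w => η⁻¹ * (1 / 2 * gAux (J + 1) K η w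
          - gAux (J + 1) (K + 1 : ℕ) η w + 1 / 2 * gAux (J + 1) (K + 2 : ℕ) η w),
      genPoly_smul, genPoly_add, genPoly_sub, genPoly_smul, genPoly_smul,
      genPoly_succ _ _ (dependsOn_gAux _ _ _), genPoly_succ _ _ (dependsOn_gAux _ _ _),
      genPoly_succ _ _ (dependsOn_gAux _ _ _), invLinear]
    ring

lemma fSeries_succ (ψ : Fin n → ℝ) (η : ℝ) (K : ℕ) :
    fSeries ψ η (K + 1) = PowerSeries.X * (PowerSeries.C (invLinear n η) *
      (PowerSeries.C (C (1 / 2)) * gSeries ψ η K - gSeries ψ η (K + 1)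
        + PowerSeries.C (C (1 / 2)) * gSeries ψ η (K + 2))) := by
  ext1 J
  rcases J with _ | J
  · rw [coeff_fSeries, PowerSeries.coeff_zero_X_mul, ← genPoly_fun_zero ψ 0]
    exact genPoly_congr _ _ fun m => by simp [fAux]
  · rw [coeff_succ_fSeries_succ, PowerSeries.coeff_succ_X_mul, PowerSeries.coeff_C_mul,
      map_add, map_sub, PowerSeries.coeff_C_mul, PowerSeries.coeff_C_mul]

lemma genPoly_fAux_zero (ψ : Fin n → ℝ) (η : ℝ) (J : ℕ) :
    genPoly ψ (J + 2) (fAux (J + 2) 0 η) =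
      invLinear n η * (C (1 / 2) * genPoly ψ (J + 1) (gAux (J + 1) 1 η)) := by
  rw [funext (fAux_add_two_zero J η),
      genPoly_symmetrize ψ (J + 2) fun w => η⁻¹ * (1 / 2 * gAux (J + 1) 1 η w),
      genPoly_smul, genPoly_smul, genPoly_succ _ _ (dependsOn_gAux _ _ _), invLinear]
  ring

lemma sum_fSeries_mul_gSeries_sub (ψ χ : Fin n → ℝ) (η : ℝ) (N : ℕ) :
    ∑ k ∈ Finset.range N, (fSeries ψ η (k + 1) * gSeries χ η (k + 1)
        - gSeries ψ η (k + 1) * fSeries χ η (k + 1)) =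
      PowerSeries.X * (PowerSeries.C (invLinear n η) * (PowerSeries.C (C (1 / 2)) *
        ((gSeries ψ η 0 * gSeries χ η 1 - gSeries ψ η 1 * gSeries χ η 0)
          - (gSeries ψ η N * gSeries χ η (N + 1) - gSeries ψ η (N + 1) * gSeries χ η N)))) := by
  induction N with
  | zero => simp
  | succ N ih =>
    rw [Finset.sum_range_succ, ih, fSeries_succ, fSeries_succ]
    ring

lemma coeff_sum_fSeries_mul_gSeries_sub (ψ χ : Fin n → ℝ) (η : ℝ) (J : ℕ) :
    PowerSeries.coeff (J + 2) (∑ k ∈ Finset.range (J + 2),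
      (fSeries ψ η (k + 1) * gSeries χ η (k + 1) - gSeries ψ η (k + 1) * fSeries χ η (k + 1))) =
      C 2 * (genPoly χ (J + 2) (fAux (J + 2) 0 η) - genPoly ψ (J + 2) (fAux (J + 2) 0 η)) := by
  have hz : ∀ ψ₁ χ₁ : Fin n → ℝ, ∀ K, PowerSeries.coeff (J + 1)
      (gSeries ψ₁ η K * gSeries χ₁ η (J + 3)) = 0 := by
    intro ψ₁ χ₁ K
    rw [PowerSeries.coeff_mul]
    refine Finset.sum_eq_zero fun x hx => ?_
    have := Finset.HasAntidiagonal.mem_antidiagonal.mp hx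
    rw [coeff_gSeries_of_lt χ₁ η (by omega), mul_zero]
  rw [sum_fSeries_mul_gSeries_sub, PowerSeries.coeff_succ_X_mul, PowerSeries.coeff_C_mul,
    PowerSeries.coeff_C_mul, map_sub, map_sub, map_sub, hz, mul_comm (gSeries ψ η (J + 2 + 1)), hz,
    gSeries_zero, gSeries_zero, genPoly_fAux_zero, genPoly_fAux_zero]
  have h2 : (2 : PowerSeries (MvPolynomial (Fin n) ℝ)) = PowerSeries.C (C 2) := by
    rw [map_ofNat C 2, map_ofNat PowerSeries.C 2]
  rw [h2, mul_comm (gSeries ψ η 1), PowerSeries.coeff_C_mul, PowerSeries.coeff_C_mul,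
    coeff_gSeries_succ, coeff_gSeries_succ]
  push_cast
  ring

lemma genPoly_GFun (ψ : Fin n → ℝ) (η : ℝ) (J : ℕ) :
    genPoly ψ J (GFun J η) = ∑ x ∈ Finset.HasAntidiagonal.antidiagonal J, ∑ k ∈ Finset.range J,
      C (1 / (4 * ((k + 1 : ℕ) : ℝ))) * (genPoly ψ x.1 (gAux x.1 (k + 1 : ℕ) η) *
        genPoly (-ψ) x.2 (gAux x.2 (k + 1 : ℕ) η)) := by
  have hterm : ∀ x ∈ Finset.HasAntidiagonal.antidiagonal J, ∀ k : ℕ,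
      genPoly ψ J (fun w => 1 / (4 * (k : ℝ)) * symProd x.1 x.2
        (fun η' ψ => gAux x.1 (k : ℤ) η' ψ)
        (fun η' ψ => gAux x.2 (k : ℤ) η' (fun i => -ψ i)) η w) =
      C (1 / (4 * (k : ℝ))) * (genPoly ψ x.1 (gAux x.1 k η) *
        genPoly (-ψ) x.2 (gAux x.2 k η)) := by
    intro x hx k
    rw [genPoly_smul, genPoly_symProd ψ (Finset.HasAntidiagonal.mem_antidiagonal.mp hx) _ _ η
      (dependsOn_gAux _ _ _), ← genPoly_neg_apply]
  have hzero : ∀ (χ : Fin n → ℝ) (j k : ℕ), j < k → genPoly χ j (gAux j k η) = 0 := by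
    intro χ j k h
    rw [← genPoly_fun_zero χ j]
    exact genPoly_congr _ _ fun m => gAux_eq_zero_of_lt _ _ _ (by exact_mod_cast h)
  have hG : genPoly ψ J (GFun J η) = ∑ j ∈ Finset.Icc 1 (J - 1),
      ∑ k ∈ Finset.Icc 1 (min j (J - j)), C (1 / (4 * (k : ℝ))) *
        (genPoly ψ j (gAux j k η) * genPoly (-ψ) (J - j) (gAux (J - j) k η)) := by
    unfold GFun
    rw [genPoly_sum]
    refine Finset.sum_congr rfl fun j hj => ?_
    rw [genPoly_sum]
    refine Finset.sum_congr rfl fun k _ => ?_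
    have := Finset.mem_Icc.mp hj
    exact hterm (j, J - j) (Finset.HasAntidiagonal.mem_antidiagonal.mpr (by dsimp only; omega)) k
  rw [hG, Finset.Nat.sum_antidiagonal_eq_sum_range_succ_mk]
  refine Finset.sum_subset_zero_on_sdiff (fun j hj => ?_) (fun j hj => ?_) (fun j hj => ?_)
  · have := Finset.mem_Icc.mp hj
    exact Finset.mem_range.mpr (by omega)
  · refine Finset.sum_eq_zero fun k _ => ?_
    simp only [Finset.mem_sdiff, Finset.mem_range, Finset.mem_Icc] at hj
    rcases Nat.eq_zero_or_pos j with h | h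
    · rw [hzero ψ j _ (by omega)]
      ring
    · rw [hzero (-ψ) (J - j) _ (by omega)]
      ring
  · have hj' := Finset.mem_Icc.mp hj
    rw [← Finset.sum_image (s := Finset.range J) (g := fun k => k + 1) (f := fun k : ℕ =>
      C (1 / (4 * (k : ℝ))) * (genPoly ψ j (gAux j k η) *
        genPoly (-ψ) (J - j) (gAux (J - j) k η))) (by simp)]
    refine Finset.sum_subset (fun k hk => ?_) (fun k _ hk => ?_)
    · have := Finset.mem_Icc.mp hk
      exact Finset.mem_image.mpr ⟨k - 1, Finset.mem_range.mpr (by omega), by omega⟩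
    · simp only [Finset.mem_Icc, not_and_or] at hk
      rename_i hk'
      obtain ⟨l, _, rfl⟩ := Finset.mem_image.mp hk'
      rcases (by omega : j < l + 1 ∨ J - j < l + 1) with h | h
      · rw [hzero _ _ _ h]
        ring
      · rw [hzero (-ψ) _ _ h]
        ring

lemma NonResonant.weightDeriv_genPoly_GFun {η : ℝ} {p : ℕ} {ψ : Fin n → ℝ}
    (hψ : NonResonant η p ψ) (hψ' : NonResonant η p (-ψ)) {J : ℕ} (hJ : J + 2 ≤ p) :
    weightDeriv ψ (genPoly ψ (J + 2) (GFun (J + 2) η)) =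
      genPoly (-ψ) (J + 2) (fAux (J + 2) 0 η) - genPoly ψ (J + 2) (fAux (J + 2) 0 η) := by
  have hterm : ∀ x ∈ Finset.HasAntidiagonal.antidiagonal (J + 2), ∀ k : ℕ,
      weightDeriv ψ (C (1 / (4 * ((k + 1 : ℕ) : ℝ))) * (genPoly ψ x.1 (gAux x.1 (k + 1 : ℕ) η) *
        genPoly (-ψ) x.2 (gAux x.2 (k + 1 : ℕ) η))) =
      C (1 / 2) * (PowerSeries.coeff x.1 (fSeries ψ η (k + 1)) *
        PowerSeries.coeff x.2 (gSeries (-ψ) η (k + 1)) -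
        PowerSeries.coeff x.1 (gSeries ψ η (k + 1)) *
        PowerSeries.coeff x.2 (fSeries (-ψ) η (k + 1))) := by
    intro x hx k
    have hx' := Finset.HasAntidiagonal.mem_antidiagonal.mp hx
    have h1 := hψ.weightDeriv_genPoly_gAux (J := x.1) (Nat.le_add_left 1 k) (by omega)
    have h2 := hψ'.weightDeriv_genPoly_gAux (J := x.2) (Nat.le_add_left 1 k) (by omega)
    rw [weightDeriv_neg, Derivation.neg_apply, neg_eq_iff_eq_neg] at h2
    rw [Derivation.leibniz, derivation_C, smul_zero, add_zero, Derivation.leibniz, h1, h2,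
      coeff_fSeries, coeff_fSeries, coeff_gSeries_of_ne_zero _ _ (Nat.succ_ne_zero k),
      coeff_gSeries_of_ne_zero _ _ (Nat.succ_ne_zero k)]
    have hc : (C (1 / 2) : MvPolynomial (Fin n) ℝ) =
        C (1 / (4 * ((k + 1 : ℕ) : ℝ))) * C (2 * ((k + 1 : ℕ) : ℝ)) := by
      rw [← C_mul]
      congr 1
      push_cast
      field_simp
      norm_num
    rw [hc]
    simp only [smul_eq_mul]
    ring
  rw [genPoly_GFun, map_sum]
  simp only [map_sum]
  rw [Finset.sum_congr rfl fun x hx => Finset.sum_congr rfl fun k _ => hterm x hx k,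
    Finset.sum_comm]
  have hsum := coeff_sum_fSeries_mul_gSeries_sub ψ (-ψ) η J
  simp only [map_sum, map_sub, PowerSeries.coeff_mul] at hsum
  simp only [← Finset.mul_sum, Finset.sum_sub_distrib] at hsum ⊢
  rw [hsum, ← mul_assoc, ← C_mul]
  norm_num

/-! ### Expressing `g_{J,1}` through `h_J` -/

/-- The generating series of the `η^{-J} h_J` over `J`. -/
noncomputable def hSeries (ψ : Fin n → ℝ) (η : ℝ) : PowerSeries (MvPolynomial (Fin n) ℝ) :=
  PowerSeries.mk fun J => C (η⁻¹ ^ J) * genPoly ψ J (hFun J η)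

lemma coeff_hSeries (ψ : Fin n → ℝ) (η : ℝ) (J : ℕ) :
    PowerSeries.coeff J (hSeries ψ η) = C (η⁻¹ ^ J) * genPoly ψ J (hFun J η) :=
  PowerSeries.coeff_mk _ _

lemma hFun_succ (J : ℕ) (η : ℝ) (w : ℕ → ℝ) :
    hFun (J + 1) η w = (η - ∑ i ∈ Finset.range (J + 1), w i)⁻¹ *
      ∑ j ∈ Finset.range (J + 1), hFun j η w * hFun (J - j) η (fun i => w (i + j)) := by
  rw [hFun, Finset.sum_attach (Finset.range (J + 1))
    fun j => hFun j η w * hFun (J - j) η (fun i => w (i + j))]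

lemma dependsOn_hFun_mul (J j : ℕ) (hj : j ≤ J) (η : ℝ) :
    DependsOn (fun w : ℕ → ℝ => hFun j η w * hFun (J - j) η (fun i => w (i + j))) (Set.Iio J) := by
  intro v w h
  dsimp only
  rw [dependsOn_hFun j η (fun i hi => h i (lt_of_lt_of_le hi hj)),
    dependsOn_hFun (J - j) η (x := fun i => v (i + j)) (y := fun i => w (i + j))
      (fun i hi => h _ (by simp only [Set.mem_Iio] at hi ⊢; omega))]

lemma NonResonant.weightDeriv_coeff_hSeries {η : ℝ} {p : ℕ} {ψ : Fin n → ℝ}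
    (hψ : NonResonant η p ψ) {J : ℕ} (hJ : J + 1 ≤ p) :
    C η * PowerSeries.coeff (J + 1) (hSeries ψ η) -
        weightDeriv ψ (PowerSeries.coeff (J + 1) (hSeries ψ η)) =
      invLinear n η * PowerSeries.coeff J (hSeries ψ η * hSeries ψ η) := by
  have h1 : C η * genPoly ψ (J + 1) (hFun (J + 1) η) -
      weightDeriv ψ (genPoly ψ (J + 1) (hFun (J + 1) η)) =
      genPoly ψ (J + 1) (fun w => ∑ j ∈ Finset.range (J + 1),
        hFun j η w * hFun (J - j) η (fun i => w (i + j))) := by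
    rw [weightDeriv_genPoly, ← genPoly_smul, ← genPoly_sub]
    refine genPoly_congr _ _ fun m => ?_
    have hs := sum_range_zeroExtend (ψ ∘ m)
    have h0 := sub_ne_zero.mpr (hψ 1 (J + 1) le_rfl (Nat.le_add_left 1 J) hJ m)
    rw [Nat.cast_one, one_mul] at h0
    simp only [Function.comp_apply] at hs
    rw [← sub_mul, hFun_succ, hs, mul_inv_cancel_left₀ h0]
  have h2 : ∀ j ∈ Finset.range (J + 1), genPoly ψ (J + 1)
      (fun w => hFun j η w * hFun (J - j) η (fun i => w (i + j))) =
        genPoly ψ j (hFun j η) * genPoly ψ (J - j) (hFun (J - j) η) * ∑ i, X i := by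
    intro j hj
    have hj' : j ≤ J := Nat.lt_succ_iff.mp (Finset.mem_range.mp hj)
    rw [genPoly_succ _ _ (dependsOn_hFun_mul J j hj' η), ← genPoly_mul _ _ _ (dependsOn_hFun j η),
      Nat.add_sub_cancel' hj']
  rw [genPoly_sum, Finset.sum_congr rfl h2] at h1
  rw [coeff_hSeries, Derivation.leibniz, derivation_C, smul_zero, add_zero, smul_eq_mul,
    mul_left_comm, ← mul_sub, h1, PowerSeries.coeff_mul,
    Finset.Nat.sum_antidiagonal_eq_sum_range_succ_mk, Finset.mul_sum, Finset.mul_sum]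
  refine Finset.sum_congr rfl fun j hj => ?_
  have hj' : j ≤ J := Nat.lt_succ_iff.mp (Finset.mem_range.mp hj)
  rw [coeff_hSeries, coeff_hSeries, invLinear]
  have : η⁻¹ ^ (J + 1) = η⁻¹ * (η⁻¹ ^ j * η⁻¹ ^ (J - j)) := by
    rw [← pow_add, Nat.add_sub_cancel' hj', pow_succ']
  rw [this]
  simp only [C_mul]
  ring

/-- The coefficientwise extension of a derivation to power series. -/
noncomputable def coeffDeriv (D : Derivation ℝ (MvPolynomial (Fin n) ℝ) (MvPolynomial (Fin n) ℝ)) :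
    Derivation ℝ (PowerSeries (MvPolynomial (Fin n) ℝ)) (PowerSeries (MvPolynomial (Fin n) ℝ)) :=
  Derivation.mk'
    { toFun := fun S => PowerSeries.mk fun j => D (PowerSeries.coeff j S)
      map_add' := fun S T => by ext1 j; simp
      map_smul' := fun r S => by
        ext1 j
        simp }
    (by
      intro S T
      ext1 j
      simp only [LinearMap.coe_mk, AddHom.coe_mk, PowerSeries.coeff_mk, map_add, smul_eq_mul]
      rw [PowerSeries.coeff_mul, PowerSeries.coeff_mul, mul_comm T, PowerSeries.coeff_mul,
        map_sum, ← Finset.sum_add_distrib]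
      refine Finset.sum_congr rfl fun x _ => ?_
      rw [Derivation.leibniz, PowerSeries.coeff_mk, PowerSeries.coeff_mk, smul_eq_mul, smul_eq_mul]
      ring)

lemma coeff_coeffDeriv (D : Derivation ℝ (MvPolynomial (Fin n) ℝ) (MvPolynomial (Fin n) ℝ))
    (S : PowerSeries (MvPolynomial (Fin n) ℝ)) (j : ℕ) :
    PowerSeries.coeff j (coeffDeriv D S) = D (PowerSeries.coeff j S) := by
  change PowerSeries.coeff j (PowerSeries.mk fun j => D (PowerSeries.coeff j S)) = _
  exact PowerSeries.coeff_mk _ _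

lemma coeff_mul_congr {R : Type*} [CommSemiring R] {S T U : PowerSeries R} {j : ℕ}
    (h : ∀ i ≤ j, PowerSeries.coeff i T = PowerSeries.coeff i U) :
    PowerSeries.coeff j (S * T) = PowerSeries.coeff j (S * U) := by
  rw [PowerSeries.coeff_mul, PowerSeries.coeff_mul]
  refine Finset.sum_congr rfl fun x hx => ?_
  rw [h x.2 (by have := Finset.HasAntidiagonal.mem_antidiagonal.mp hx; omega)]

lemma coeff_pow_isHomogeneous {S : PowerSeries (MvPolynomial (Fin n) ℝ)}
    (hS : ∀ j, (PowerSeries.coeff j S).IsHomogeneous j) (k j : ℕ) :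
    (PowerSeries.coeff j (S ^ k)).IsHomogeneous j := by
  induction k generalizing j with
  | zero =>
    rw [pow_zero, PowerSeries.coeff_one]
    split_ifs with h
    · rw [h]
      exact isHomogeneous_one _ _
    · exact isHomogeneous_zero _ _ _
  | succ k ih =>
    rw [pow_succ, PowerSeries.coeff_mul]
    refine IsHomogeneous.sum _ _ _ fun x hx => ?_
    rw [← Finset.HasAntidiagonal.mem_antidiagonal.mp hx]
    exact (ih x.1).mul (hS x.2)

lemma coeff_zero_hSeries (ψ : Fin n → ℝ) (η : ℝ) : PowerSeries.coeff 0 (hSeries ψ η) = 1 := by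
  rw [coeff_hSeries, genPoly_zero]
  simp [hFun]

lemma coeff_one_sub_hSeries_succ (ψ : Fin n → ℝ) (η : ℝ) (J : ℕ) :
    PowerSeries.coeff (J + 1) (1 - hSeries ψ η) =
      -(C (η⁻¹ ^ (J + 1)) * genPoly ψ (J + 1) (hFun (J + 1) η)) := by
  rw [map_sub, coeff_hSeries, PowerSeries.coeff_one, if_neg (Nat.succ_ne_zero J), zero_sub]

lemma coeff_one_sub_hSeries_pow_of_lt (ψ : Fin n → ℝ) (η : ℝ) {k j : ℕ} (h : j < k) :
    PowerSeries.coeff j ((1 - hSeries ψ η) ^ k) = 0 := by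
  refine PowerSeries.X_pow_dvd_iff.mp (pow_dvd_pow_of_dvd ?_ k) j h
  rw [PowerSeries.X_dvd_iff, ← PowerSeries.coeff_zero_eq_constantCoeff_apply, map_sub,
    coeff_zero_hSeries, PowerSeries.coeff_zero_one, sub_self]

lemma NonResonant.weightDeriv_coeff_one_sub_hSeries_pow {η : ℝ} {p : ℕ} {ψ : Fin n → ℝ}
    (hψ : NonResonant η p ψ) {J : ℕ} (hJ : J + 1 ≤ p) (k : ℕ) :
    C (((k + 1 : ℕ) : ℝ) * η) * PowerSeries.coeff (J + 1) ((1 - hSeries ψ η) ^ (k + 1)) -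
        weightDeriv ψ (PowerSeries.coeff (J + 1) ((1 - hSeries ψ η) ^ (k + 1))) =
      -(C ((k + 1 : ℕ) : ℝ) * (invLinear n η * PowerSeries.coeff J
        ((1 - hSeries ψ η) ^ k * (hSeries ψ η * hSeries ψ η)))) := by
  set H := 1 - hSeries ψ η with hH
  set D := coeffDeriv (weightDeriv ψ) with hD
  have hbase : ∀ i ≤ J + 1, PowerSeries.coeff i (PowerSeries.C (C η) * H - D H) =
      PowerSeries.coeff i (PowerSeries.X * (PowerSeries.C (-invLinear n η) *
        (hSeries ψ η * hSeries ψ η))) := by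
    intro i hi
    rw [map_sub, PowerSeries.coeff_C_mul, hD, coeff_coeffDeriv]
    rcases i with _ | i
    · rw [PowerSeries.coeff_zero_X_mul, hH, map_sub, coeff_zero_hSeries,
        PowerSeries.coeff_zero_one, sub_self, map_zero, mul_zero, sub_zero]
    · have hc : PowerSeries.coeff (i + 1) H = -PowerSeries.coeff (i + 1) (hSeries ψ η) := by
        rw [hH, map_sub, PowerSeries.coeff_one, if_neg (Nat.succ_ne_zero i), zero_sub]
      rw [PowerSeries.coeff_succ_X_mul, PowerSeries.coeff_C_mul, neg_mul,
        ← hψ.weightDeriv_coeff_hSeries (hi.trans hJ), hc, map_neg]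
      ring
  have hprod : PowerSeries.C (C (((k + 1 : ℕ) : ℝ) * η)) * H ^ (k + 1) - D (H ^ (k + 1)) =
      PowerSeries.C (C ((k + 1 : ℕ) : ℝ)) * (H ^ k * (PowerSeries.C (C η) * H - D H)) := by
    rw [Derivation.leibniz_pow, C_mul, map_mul, nsmul_eq_mul, Nat.add_sub_cancel, smul_eq_mul,
      map_natCast C, map_natCast PowerSeries.C]
    ring
  have := congrArg (PowerSeries.coeff (J + 1)) hprod
  rw [map_sub, PowerSeries.coeff_C_mul, PowerSeries.coeff_C_mul, hD, coeff_coeffDeriv, ← hD,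
    coeff_mul_congr hbase] at this
  rw [this, mul_left_comm (H ^ k), PowerSeries.coeff_succ_X_mul, mul_left_comm (H ^ k),
    PowerSeries.coeff_C_mul]
  ring

lemma NonResonant.coeff_gSeries {η : ℝ} {p : ℕ} {ψ : Fin n → ℝ} (hψ : NonResonant η p ψ)
    {J : ℕ} (hJ : J ≤ p) (k : ℕ) :
    PowerSeries.coeff J (gSeries ψ η k) = 2 * PowerSeries.coeff J ((1 - hSeries ψ η) ^ k) := by
  induction J generalizing k with
  | zero =>
    rcases k with _ | k
    · simp [coeff_zero_gSeries]
    · rw [coeff_gSeries_of_lt _ _ (Nat.succ_pos k),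
        coeff_one_sub_hSeries_pow_of_lt _ _ (Nat.succ_pos k), mul_zero]
  | succ J ih =>
    rcases k with _ | k
    · rw [gSeries_zero, coeff_two_succ, pow_zero, PowerSeries.coeff_one,
        if_neg (Nat.succ_ne_zero J), mul_zero]
    rcases lt_or_ge (J + 1) (k + 1) with hk | hk
    · rw [coeff_gSeries_of_lt _ _ hk, coeff_one_sub_hSeries_pow_of_lt _ _ hk, mul_zero]
    have hhom : ∀ j, (PowerSeries.coeff j (1 - hSeries ψ η)).IsHomogeneous j := by
      intro j
      rw [map_sub, coeff_hSeries, PowerSeries.coeff_one]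
      refine IsHomogeneous.sub ?_ ?_
      · split_ifs with h
        · rw [h]
          exact isHomogeneous_one _ _
        · exact isHomogeneous_zero _ _ _
      · exact (genPoly_isHomogeneous ψ j (hFun j η)).C_mul _
    have htwo : (2 : MvPolynomial (Fin n) ℝ) = C 2 := (map_ofNat C 2).symm
    rw [← sub_eq_zero]
    refine hψ.eq_zero_of_weightDeriv_eq (Nat.le_add_left 1 k) hk hJ ?_ ?_
    · refine IsHomogeneous.sub ?_ ?_
      · rw [coeff_gSeries_succ]
        exact genPoly_isHomogeneous _ _ _
      · rw [htwo]
        exact (coeff_pow_isHomogeneous hhom _ _).C_mul _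
    · have hg := hψ.weightDeriv_genPoly_gAux (K := k + 1) (Nat.le_add_left 1 k) hJ
      have hf := coeff_succ_fSeries_succ ψ η k J
      rw [coeff_fSeries, ih (by omega), ih (by omega), ih (by omega)] at hf
      have hh := hψ.weightDeriv_coeff_one_sub_hSeries_pow hJ k
      have hexp : (1 - hSeries ψ η) ^ k * (hSeries ψ η * hSeries ψ η) =
          (1 - hSeries ψ η) ^ k - 2 * (1 - hSeries ψ η) ^ (k + 1)
            + (1 - hSeries ψ η) ^ (k + 2) := by ring
      have h2 : (2 : PowerSeries (MvPolynomial (Fin n) ℝ)) = PowerSeries.C (C 2) := by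
        rw [map_ofNat C 2, map_ofNat PowerSeries.C 2]
      rw [hexp, map_add, map_sub, h2, PowerSeries.coeff_C_mul] at hh
      have hhalf : (C (1 / 2) * C 2 : MvPolynomial (Fin n) ℝ) = 1 := by
        rw [← C_mul]
        norm_num
      rw [map_sub, htwo, Derivation.leibniz, derivation_C, smul_zero, add_zero, smul_eq_mul,
        coeff_gSeries_succ, hg, hf, htwo]
      rw [C_mul (a := (2 : ℝ))]
      linear_combination (-C 2) * hh + C 2 * C ((k + 1 : ℕ) : ℝ) * invLinear n η *
        (-PowerSeries.coeff J ((1 - hSeries ψ η) ^ k) -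
          PowerSeries.coeff J ((1 - hSeries ψ η) ^ (k + 2))) * hhalf

lemma NonResonant.genPoly_fAux_zero_eq {η : ℝ} {p : ℕ} {ψ : Fin n → ℝ} (hψ : NonResonant η p ψ)
    {J : ℕ} (hJ : J + 1 ≤ p) :
    genPoly ψ (J + 2) (fAux (J + 2) 0 η) =
      genPoly ψ (J + 2) (fun w => -(η⁻¹ ^ (J + 2)) * hFun (J + 1) η w) := by
  have h := hψ.coeff_gSeries hJ 1
  rw [coeff_gSeries_succ, pow_one, coeff_one_sub_hSeries_succ] at h
  rw [Nat.cast_one] at h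
  have hhalf : (C (1 / 2) * 2 : MvPolynomial (Fin n) ℝ) = 1 := by
    rw [← map_ofNat C 2, ← C_mul]
    norm_num
  rw [genPoly_fAux_zero, h, genPoly_smul, genPoly_succ _ _ (dependsOn_hFun _ _), invLinear,
    pow_succ η⁻¹ (J + 1)]
  simp only [C_mul, C_neg]
  linear_combination (-C η⁻¹ * (∑ i, X i) * C (η⁻¹ ^ (J + 1)) *
    genPoly ψ (J + 1) (hFun (J + 1) η)) * hhalf

/-! ### Pointwise consequences -/

lemma permuteFirst_permuteFirst {J : ℕ} (σ τ : Equiv.Perm (Fin J)) (w : ℕ → ℝ) :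
    permuteFirst σ (permuteFirst τ w) = permuteFirst (τ * σ) w := by
  funext i
  by_cases h : i < J <;> simp [permuteFirst, h]

lemma fAux_zero_permuteFirst (J : ℕ) (η : ℝ) (τ : Equiv.Perm (Fin (J + 2))) (w : ℕ → ℝ) :
    fAux (J + 2) 0 η (permuteFirst τ w) = fAux (J + 2) 0 η w := by
  rw [fAux_add_two_zero, fAux_add_two_zero]
  congr 1
  refine Fintype.sum_equiv (Equiv.mulLeft τ) _ _ fun σ => ?_
  rw [permuteFirst_permuteFirst]
  rfl

lemma symProd_permuteFirst {I L J : ℕ} (h : I + L = J) (p q : ℝ → (ℕ → ℝ) → ℝ) (η : ℝ)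
    (τ : Equiv.Perm (Fin J)) (w : ℕ → ℝ) :
    symProd I L p q η (permuteFirst τ w) = symProd I L p q η w := by
  subst h
  rw [symProd_eq, symProd_eq]
  congr 1
  refine Fintype.sum_equiv (Equiv.mulLeft τ) _ _ fun σ => ?_
  rw [permuteFirst_permuteFirst]
  rfl

lemma GFun_permuteFirst {J : ℕ} (η : ℝ) (τ : Equiv.Perm (Fin J)) (w : ℕ → ℝ) :
    GFun J η (permuteFirst τ w) = GFun J η w := by
  unfold GFun
  refine Finset.sum_congr rfl fun j hj => Finset.sum_congr rfl fun k _ => ?_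
  have := Finset.mem_Icc.mp hj
  rw [symProd_permuteFirst (by omega)]

lemma permuteFirst_neg {J : ℕ} (τ : Equiv.Perm (Fin J)) (w : ℕ → ℝ) :
    (fun i => -permuteFirst τ w i) = permuteFirst τ (fun i => -w i) := by
  funext i
  by_cases h : i < J <;> simp [permuteFirst, h]

/-- The reflection-odd part of `f_{J,0}` is divisible by `φ_1 + ⋯ + φ_J`, with quotient
`-𝒢_{J,0}`. -/
lemma NonResonant.fAux_zero_sub_neg {η : ℝ} {p J : ℕ} {ψ : Fin (J + 2) → ℝ}
    (hψ : NonResonant η p ψ) (hψ' : NonResonant η p (-ψ)) (hJ : J + 2 ≤ p) :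
    fAux (J + 2) 0 η (zeroExtend ψ) - fAux (J + 2) 0 η (zeroExtend (-ψ)) =
      -((∑ i, ψ i) * GFun (J + 2) η (zeroExtend ψ)) := by
  have h := hψ.weightDeriv_genPoly_GFun hψ' hJ
  rw [weightDeriv_genPoly, ← genPoly_neg_apply, ← genPoly_sub, ← sub_eq_zero,
    ← genPoly_sub] at h
  have hsum := sum_perm_eq_zero_of_genPoly_eq_zero h
  have hconst : ∀ σ : Equiv.Perm (Fin (J + 2)),
      ((∑ i ∈ Finset.range (J + 2), zeroExtend (ψ ∘ σ) i) * GFun (J + 2) η (zeroExtend (ψ ∘ σ)) -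
        (fAux (J + 2) 0 η (fun i => -zeroExtend (ψ ∘ σ) i) -
          fAux (J + 2) 0 η (zeroExtend (ψ ∘ σ)))) =
      (∑ i, ψ i) * GFun (J + 2) η (zeroExtend ψ) - (fAux (J + 2) 0 η (zeroExtend (-ψ)) -
          fAux (J + 2) 0 η (zeroExtend ψ)) := by
    intro σ
    rw [sum_range_zeroExtend, ← permuteFirst_zeroExtend, permuteFirst_neg, GFun_permuteFirst,
      fAux_zero_permuteFirst, fAux_zero_permuteFirst, zeroExtend_neg]
    simp only [Function.comp_apply]
    rw [Equiv.sum_comp σ ψ]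
  rw [Finset.sum_congr rfl fun σ _ => hconst σ, Finset.sum_const, nsmul_eq_mul, mul_eq_zero] at hsum
  rcases hsum with hsum | hsum
  · simp [Finset.card_univ, Fintype.card_perm, Nat.factorial_ne_zero] at hsum
  · linarith

lemma NonResonant.abs_fAux_zero_le {η : ℝ} (hη : 0 < η) {p J : ℕ} {ψ : Fin (J + 2) → ℝ}
    (hψ : NonResonant η p ψ) (hJ : J + 1 ≤ p) :
    |fAux (J + 2) 0 η (zeroExtend ψ)| ≤ η⁻¹ ^ (J + 2) *
      ∑ σ : Equiv.Perm (Fin (J + 2)), |hFun (J + 1) η (zeroExtend (ψ ∘ σ))| := by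
  have h := hψ.genPoly_fAux_zero_eq hJ
  rw [← sub_eq_zero, ← genPoly_sub] at h
  have hsum := sum_perm_eq_zero_of_genPoly_eq_zero h
  rw [Finset.sum_sub_distrib, sub_eq_zero, ← Finset.mul_sum,
    Finset.sum_congr rfl fun σ _ => by rw [← permuteFirst_zeroExtend, fAux_zero_permuteFirst],
    Finset.sum_const, nsmul_eq_mul] at hsum
  have hcard : (1 : ℝ) ≤ (Finset.univ : Finset (Equiv.Perm (Fin (J + 2)))).card := by
    exact_mod_cast Finset.card_pos.mpr Finset.univ_nonempty
  calc |fAux (J + 2) 0 η (zeroExtend ψ)|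
      ≤ (Finset.univ : Finset (Equiv.Perm (Fin (J + 2)))).card *
          |fAux (J + 2) 0 η (zeroExtend ψ)| := le_mul_of_one_le_left (abs_nonneg _) hcard
    _ = η⁻¹ ^ (J + 2) * |∑ σ : Equiv.Perm (Fin (J + 2)), hFun (J + 1) η (zeroExtend (ψ ∘ σ))| := by
        rw [← Nat.abs_cast, ← abs_mul, hsum, abs_mul, abs_neg, abs_of_pos (by positivity)]
    _ ≤ _ := by
        gcongr
        exact Finset.abs_sum_le_sum_abs _ _

end GeneratingPolynomials

/-! ### Functions of bounded variation on the half-line -/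

/-- On `(0,∞)`, the function `W` bounds the norm of `Γ`, and the decrements of `W` bound the
increments of `Γ`. -/
def TailBound (W : ℝ → ℝ) (Γ : ℝ → ℂ) : Prop :=
  (∀ x, 0 < x → ‖Γ x‖ ≤ W x) ∧ ∀ x y, 0 < x → x ≤ y → ‖Γ x - Γ y‖ ≤ W x - W y

/-- The variation of `f` on `[x,∞)`. -/
noncomputable def tailVariation (f : ℝ → ℂ) (x : ℝ) : ℝ := (eVariationOn f (Set.Ici x)).toReal

lemma tailVariation_le {f : ℝ → ℂ} (hf : BoundedVariationOn f (Set.Ioi 0)) {x : ℝ} (hx : 0 < x) :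
    tailVariation f x ≤ (eVariationOn f (Set.Ioi 0)).toReal :=
  ENNReal.toReal_mono hf (eVariationOn.mono f fun _ hy => hx.trans_le hy)

lemma norm_sub_le_tailVariation_sub {f : ℝ → ℂ} (hf : BoundedVariationOn f (Set.Ioi 0)) {x y : ℝ}
    (hx : 0 < x) (hxy : x ≤ y) : ‖f x - f y‖ ≤ tailVariation f x - tailVariation f y := by
  have hIcc : BoundedVariationOn f (Set.Icc x y) := hf.mono fun z hz => hx.trans_le hz.1
  have hIci : BoundedVariationOn f (Set.Ici y) := hf.mono fun z hz => hx.trans_le (hxy.trans hz)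
  have h := eVariationOn.union f (isGreatest_Icc hxy) (isLeast_Ici (a := y))
  rw [Set.Icc_union_Ici_eq_Ici hxy] at h
  rw [tailVariation, tailVariation, h, ENNReal.toReal_add hIcc hIci, add_sub_cancel_right,
    ← dist_eq_norm]
  exact hIcc.dist_le (Set.left_mem_Icc.mpr hxy) (Set.right_mem_Icc.mpr hxy)

lemma norm_le_tailVariation {f : ℝ → ℂ} (hf : BoundedVariationOn f (Set.Ioi 0)) {p : ℕ}
    (hp : ∫⁻ x in Set.Ioi (0 : ℝ), (‖f x‖₊ : ℝ≥0∞) ^ p < ⊤) {x : ℝ} (hx : 0 < x) :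
    ‖f x‖ ≤ tailVariation f x := by
  by_contra! h
  set δ : ℝ := ‖f x‖ - tailVariation f x with hδ
  have hlow : ∀ y ∈ Set.Ioi x, ENNReal.ofReal δ ^ p ≤ (‖f y‖₊ : ℝ≥0∞) ^ p := by
    intro y hy
    have h1 := norm_sub_le_tailVariation_sub hf hx (le_of_lt hy)
    have h2 := norm_sub_norm_le (f x) (f y)
    have h3 : 0 ≤ tailVariation f y := ENNReal.toReal_nonneg
    gcongr
    rw [← enorm_eq_nnnorm, ← ofReal_norm]
    exact ENNReal.ofReal_le_ofReal (by linarith)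
  have htop : ∫⁻ _ in Set.Ioi x, ENNReal.ofReal δ ^ p = ⊤ := by
    rw [setLIntegral_const, Real.volume_Ioi, ENNReal.mul_top]
    exact pow_ne_zero _ (ENNReal.ofReal_pos.mpr (sub_pos.mpr h)).ne'
  refine hp.ne (top_le_iff.mp ?_)
  rw [← htop]
  exact (setLIntegral_mono' measurableSet_Ioi hlow).trans
    (lintegral_mono_set (Set.Ioi_subset_Ioi hx.le))

lemma aestronglyMeasurable_of_boundedVariationOn {f : ℝ → ℂ}
    (hf : BoundedVariationOn f (Set.Ioi 0)) :
    AEStronglyMeasurable f (volume.restrict (Set.Ioi 0)) := by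
  have hreal : ∀ g : ℝ → ℝ, BoundedVariationOn g (Set.Ioi 0) →
      AEMeasurable g (volume.restrict (Set.Ioi 0)) := by
    intro g hg
    obtain ⟨q, r, hq, hr, h⟩ :=
      hg.locallyBoundedVariationOn.exists_monotoneOn_sub_monotoneOn'
    refine ((aemeasurable_restrict_of_monotoneOn measurableSet_Ioi hq).sub
      (aemeasurable_restrict_of_monotoneOn measurableSet_Ioi hr)).congr ?_
    exact Filter.Eventually.of_forall fun x => (congrFun h.1 x).symm
  have hre := hreal _ (Complex.reCLM.lipschitz.comp_boundedVariationOn hf)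
  have him := hreal _ (Complex.imCLM.lipschitz.comp_boundedVariationOn hf)
  refine AEMeasurable.aestronglyMeasurable ?_
  exact ((Complex.measurable_ofReal.comp_aemeasurable hre).add
    ((Complex.measurable_ofReal.comp_aemeasurable him).mul_const Complex.I)).congr
      (Filter.Eventually.of_forall fun x => Complex.re_add_im (f x))

lemma norm_prod_sub_prod_le {ι : Type*} (s : Finset ι) {a b : ι → ℂ} {u v : ι → ℝ}
    (ha : ∀ i ∈ s, ‖a i‖ ≤ u i) (hb : ∀ i ∈ s, ‖b i‖ ≤ v i)
    (hab : ∀ i ∈ s, ‖a i - b i‖ ≤ u i - v i) :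
    ‖∏ i ∈ s, a i - ∏ i ∈ s, b i‖ ≤ ∏ i ∈ s, u i - ∏ i ∈ s, v i := by
  classical
  induction s using Finset.induction_on with
  | empty => simp
  | insert j s hj ih =>
    simp only [Finset.forall_mem_insert] at ha hb hab
    rw [Finset.prod_insert hj, Finset.prod_insert hj, Finset.prod_insert hj, Finset.prod_insert hj]
    calc ‖a j * ∏ i ∈ s, a i - b j * ∏ i ∈ s, b i‖
        = ‖(a j - b j) * ∏ i ∈ s, a i + b j * (∏ i ∈ s, a i - ∏ i ∈ s, b i)‖ := by ring_nf
      _ ≤ ‖a j - b j‖ * ∏ i ∈ s, ‖a i‖ + ‖b j‖ * ‖∏ i ∈ s, a i - ∏ i ∈ s, b i‖ := by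
        rw [← norm_prod, ← norm_mul, ← norm_mul]
        exact norm_add_le _ _
      _ ≤ (u j - v j) * ∏ i ∈ s, u i + v j * (∏ i ∈ s, u i - ∏ i ∈ s, v i) := by
        refine add_le_add (mul_le_mul hab.1 (Finset.prod_le_prod (fun i _ => norm_nonneg _) ha.2)
          (by positivity) ((norm_nonneg _).trans hab.1)) (mul_le_mul hb.1
          (ih ha.2 hb.2 hab.2) (norm_nonneg _) ((norm_nonneg _).trans hb.1))
      _ = u j * ∏ i ∈ s, u i - v j * ∏ i ∈ s, v i := by ring

lemma TailBound.prod {ι : Type*} {s : Finset ι} {W : ι → ℝ → ℝ} {Γ : ι → ℝ → ℂ}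
    (h : ∀ i ∈ s, TailBound (W i) (Γ i)) :
    TailBound (fun x => ∏ i ∈ s, W i x) (fun x => ∏ i ∈ s, Γ i x) := by
  refine ⟨fun x hx => ?_, fun x y hx hxy => ?_⟩
  · rw [norm_prod]
    exact Finset.prod_le_prod (fun i _ => norm_nonneg _) fun i hi => (h i hi).1 x hx
  · exact norm_prod_sub_prod_le s (fun i hi => (h i hi).1 x hx)
      (fun i hi => (h i hi).1 y (hx.trans_le hxy)) fun i hi => (h i hi).2 x y hx hxy

lemma norm_le_of_additive {R : ℝ → ℝ → ℂ} {W : ℝ → ℝ} {a b M : ℝ} (hab : a ≤ b)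
    (hzero : R a a = 0)
    (hadd : ∀ x y, a ≤ x → x ≤ y → y ≤ b → R a x + R x y = R a y)
    (hle : ∀ x y, a ≤ x → x ≤ y → y ≤ b → ‖R x y‖ ≤ (1 + M * (y - x)) * (W x - W y)) :
    ‖R a b‖ ≤ W a - W b := by
  have hstep : ∀ h : ℝ, 0 ≤ h → ∀ N : ℕ, a + N * h ≤ b →
      ‖R a (a + N * h)‖ ≤ (1 + M * h) * (W a - W (a + N * h)) := by
    intro h hh N
    induction N with
    | zero => simp [hzero]
    | succ N ih =>
      intro hN
      push_cast at hN ⊢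
      have hx : a ≤ a + N * h := le_add_of_nonneg_right (by positivity)
      have hxy : a + N * h ≤ a + (N + 1) * h := by linarith
      have h1 := hle _ _ hx hxy hN
      rw [show a + (N + 1) * h - (a + N * h) = h by ring] at h1
      rw [← hadd _ _ hx hxy hN]
      refine (norm_add_le _ _).trans ((add_le_add (ih (hxy.trans hN)) h1).trans_eq ?_)
      ring
  have hlim : Filter.Tendsto (fun N : ℕ => (1 + M * ((b - a) / ((N : ℝ) + 1))) * (W a - W b))
      Filter.atTop (nhds ((1 + M * 0) * (W a - W b))) := by
    refine ((tendsto_const_nhds.add (tendsto_const_nhds.mul ?_))).mul_const _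
    have := (tendsto_one_div_add_atTop_nhds_zero_nat (𝕜 := ℝ)).const_mul (b - a)
    simpa [div_eq_mul_inv] using this
  rw [mul_zero, add_zero, one_mul] at hlim
  refine ge_of_tendsto' hlim fun N => ?_
  have hN : a + ((N + 1 : ℕ) : ℝ) * ((b - a) / ((N : ℝ) + 1)) = b := by
    push_cast
    field_simp
    ring
  have := hstep ((b - a) / ((N : ℝ) + 1)) (div_nonneg (sub_nonneg.mpr hab) (by positivity)) (N + 1)
    hN.le
  rwa [hN] at this

/-! ### Oscillatory integrals -/

lemma norm_exp_neg_I_mul (Φ x : ℝ) : ‖Complex.exp (-Complex.I * Φ * x)‖ = 1 := by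
  rw [Complex.norm_exp]
  simp

lemma hasDerivAt_exp_neg_I_mul (Φ x : ℝ) :
    HasDerivAt (fun t : ℝ => Complex.I * Complex.exp (-Complex.I * Φ * t))
      (Φ * Complex.exp (-Complex.I * Φ * x)) x := by
  have h : HasDerivAt (fun t : ℝ => -Complex.I * Φ * (t : ℂ)) (-Complex.I * Φ) x := by
    simpa using (Complex.ofRealCLM.hasDerivAt (x := x)).const_mul (-Complex.I * Φ)
  refine (h.cexp.const_mul Complex.I).congr_deriv ?_
  linear_combination (-(Φ : ℂ) * Complex.exp (-Complex.I * Φ * x)) * Complex.I_mul_I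

lemma integral_exp_neg_I_mul (Φ x y : ℝ) :
    Φ * ∫ t in x..y, Complex.exp (-Complex.I * Φ * t) =
      Complex.I * Complex.exp (-Complex.I * Φ * y) -
        Complex.I * Complex.exp (-Complex.I * Φ * x) := by
  rw [← intervalIntegral.integral_const_mul]
  exact intervalIntegral.integral_eq_sub_of_hasDerivAt
    (fun t _ => hasDerivAt_exp_neg_I_mul Φ t) (Continuous.intervalIntegrable (by fun_prop) _ _)

lemma TailBound.antitone {W : ℝ → ℝ} {Γ : ℝ → ℂ} (h : TailBound W Γ) {x y : ℝ} (hx : 0 < x)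
    (hxy : x ≤ y) : W y ≤ W x :=
  sub_nonneg.mp ((norm_nonneg _).trans (h.2 x y hx hxy))

lemma TailBound.intervalIntegrable {W : ℝ → ℝ} {Γ : ℝ → ℂ} {L : ℝ} (h : TailBound W Γ)
    (hL : ∀ x, 0 < x → W x ≤ L) (hm : AEStronglyMeasurable Γ (volume.restrict (Set.Ioi 0)))
    (Φ : ℝ) {x y : ℝ} (hx : 0 ≤ x) (hxy : x ≤ y) :
    IntervalIntegrable (fun t => Complex.exp (-Complex.I * Φ * t) * Γ t) volume x y := by
  have hsub : Set.Ioc x y ⊆ Set.Ioi 0 := fun t ht => hx.trans_lt ht.1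
  rw [intervalIntegrable_iff_integrableOn_Ioc_of_le hxy]
  refine Integrable.of_bound ?_ L ?_
  · exact (Continuous.aestronglyMeasurable (by fun_prop)).mul (hm.mono_set hsub)
  · filter_upwards [ae_restrict_mem measurableSet_Ioc] with t ht
    rw [norm_mul, norm_exp_neg_I_mul, one_mul]
    exact (h.1 t (hsub ht)).trans (hL t (hsub ht))

lemma TailBound.norm_sub_boundary_le {W : ℝ → ℝ} {Γ : ℝ → ℂ} {L : ℝ} (h : TailBound W Γ)
    (hL : ∀ x, 0 < x → W x ≤ L) (hm : AEStronglyMeasurable Γ (volume.restrict (Set.Ioi 0)))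
    (Φ : ℝ) {x y : ℝ} (hx : 0 < x) (hxy : x ≤ y) :
    ‖Φ * (∫ t in x..y, Complex.exp (-Complex.I * Φ * t) * Γ t) -
      (Complex.I * Complex.exp (-Complex.I * Φ * y) * Γ y -
        Complex.I * Complex.exp (-Complex.I * Φ * x) * Γ x)‖ ≤
      (1 + |Φ| * (y - x)) * (W x - W y) := by
  have hconst : IntervalIntegrable (fun t : ℝ => Complex.exp (-Complex.I * Φ * t) * Γ y)
      volume x y := Continuous.intervalIntegrable (by fun_prop) _ _
  have hsplit : Φ * (∫ t in x..y, Complex.exp (-Complex.I * Φ * t) * Γ t) -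
      (Complex.I * Complex.exp (-Complex.I * Φ * y) * Γ y -
        Complex.I * Complex.exp (-Complex.I * Φ * x) * Γ x) =
      Φ * (∫ t in x..y, Complex.exp (-Complex.I * Φ * t) * (Γ t - Γ y)) +
        Complex.I * Complex.exp (-Complex.I * Φ * x) * (Γ x - Γ y) := by
    simp only [mul_sub (Complex.exp _)]
    rw [intervalIntegral.integral_sub (h.intervalIntegrable hL hm Φ hx.le hxy) hconst,
      intervalIntegral.integral_mul_const, mul_sub, ← mul_assoc (Φ : ℂ), integral_exp_neg_I_mul]
    ring
  have hint : ‖∫ t in x..y, Complex.exp (-Complex.I * Φ * t) * (Γ t - Γ y)‖ ≤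
      (W x - W y) * |y - x| := by
    refine intervalIntegral.norm_integral_le_of_norm_le_const fun t ht => ?_
    rw [Set.uIoc_of_le hxy] at ht
    rw [norm_mul, norm_exp_neg_I_mul, one_mul]
    have h1 := h.2 t y (hx.trans ht.1) ht.2
    have h2 := h.antitone hx ht.1.le
    linarith
  rw [abs_of_nonneg (sub_nonneg.mpr hxy)] at hint
  rw [hsplit]
  refine (norm_add_le _ _).trans ?_
  rw [norm_mul, norm_mul, norm_mul, norm_exp_neg_I_mul, Complex.norm_I, Complex.norm_real,
    Real.norm_eq_abs, mul_one, one_mul]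
  have h1 := mul_le_mul_of_nonneg_left hint (abs_nonneg Φ)
  have h2 := h.2 x y hx hxy
  linarith

/-- A substitute for integration by parts against a function of bounded variation. -/
lemma TailBound.norm_mul_integral_le {W : ℝ → ℝ} {Γ : ℝ → ℂ} {L : ℝ} (h : TailBound W Γ)
    (hL : ∀ x, 0 < x → W x ≤ L) (hm : AEStronglyMeasurable Γ (volume.restrict (Set.Ioi 0)))
    (Φ : ℝ) {a b : ℝ} (ha : 0 ≤ a) (hab : a < b) :
    ‖Φ * ∫ t in a..b, Complex.exp (-Complex.I * Φ * t) * Γ t‖ ≤ 2 * L := by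
  have hpos : ∀ x, 0 < x → x ≤ b →
      ‖Φ * ∫ t in x..b, Complex.exp (-Complex.I * Φ * t) * Γ t‖ ≤ 2 * L := by
    intro x hx hxb
    have hR := norm_le_of_additive (W := W) (M := |Φ|) hxb
      (R := fun u v => Φ * (∫ t in u..v, Complex.exp (-Complex.I * Φ * t) * Γ t) -
        (Complex.I * Complex.exp (-Complex.I * Φ * v) * Γ v -
          Complex.I * Complex.exp (-Complex.I * Φ * u) * Γ u)) (by simp)
      (fun u v hu huv _ => by
        rw [← intervalIntegral.integral_add_adjacent_intervals
          (h.intervalIntegrable hL hm Φ hx.le hu)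
          (h.intervalIntegrable hL hm Φ (hx.le.trans hu) huv)]
        ring)
      (fun u v hu huv _ => h.norm_sub_boundary_le hL hm Φ (hx.trans_le hu) huv)
    have hbd : ∀ u, ‖Complex.I * Complex.exp (-Complex.I * Φ * (u : ℝ)) * Γ u‖ = ‖Γ u‖ := by
      intro u
      rw [norm_mul, norm_mul, norm_exp_neg_I_mul, Complex.norm_I, one_mul, one_mul]
    have h1 := norm_sub_norm_le (Φ * ∫ t in x..b, Complex.exp (-Complex.I * Φ * t) * Γ t)
      (Complex.I * Complex.exp (-Complex.I * Φ * b) * Γ b -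
          Complex.I * Complex.exp (-Complex.I * Φ * x) * Γ x)
    have h2 := norm_sub_le (Complex.I * Complex.exp (-Complex.I * Φ * b) * Γ b)
      (Complex.I * Complex.exp (-Complex.I * Φ * x) * Γ x)
    rw [hbd, hbd] at h2
    have h3 := h.1 x hx
    have h4 := h.1 b (hx.trans_le hxb)
    have h5 := hL x hx
    linarith
  have hlim : Filter.Tendsto (fun x => |Φ| * (L * (x - a)) + 2 * L) (nhdsWithin a (Set.Ioi a))
      (nhds (|Φ| * (L * (a - a)) + 2 * L)) :=
    ((by fun_prop : Continuous fun x => |Φ| * (L * (x - a)) + 2 * L).tendsto a).mono_left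
      nhdsWithin_le_nhds
  rw [sub_self, mul_zero, mul_zero, zero_add] at hlim
  refine ge_of_tendsto hlim ?_
  filter_upwards [Ioc_mem_nhdsGT hab] with x hx
  have hx0 : 0 < x := ha.trans_lt hx.1
  rw [← intervalIntegral.integral_add_adjacent_intervals
    (h.intervalIntegrable hL hm Φ ha hx.1.le) (h.intervalIntegrable hL hm Φ hx0.le hx.2), mul_add]
  refine (norm_add_le _ _).trans (add_le_add ?_ (hpos x hx0 hx.2))
  rw [norm_mul, Complex.norm_real, Real.norm_eq_abs]
  refine mul_le_mul_of_nonneg_left ?_ (abs_nonneg Φ)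
  have hint : ‖∫ t in a..x, Complex.exp (-Complex.I * Φ * t) * Γ t‖ ≤ L * |x - a| := by
    refine intervalIntegral.norm_integral_le_of_norm_le_const fun t ht => ?_
    rw [Set.uIoc_of_le hx.1.le] at ht
    rw [norm_mul, norm_exp_neg_I_mul, one_mul]
    exact (h.1 t (ha.trans_lt ht.1)).trans (hL t (ha.trans_lt ht.1))
  rwa [abs_of_pos (sub_pos.mpr hx.1)] at hint

/-! ### The multiple sums -/

lemma prod_oscillation_eq {J : ℕ} (c : ℕ → ℂ) (φ : ℕ → ℝ) (γ : ℕ → ℝ → ℂ) (m : Fin J → ℕ) (x : ℝ) :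
    ∏ i, (c (m i) * Complex.exp (-Complex.I * φ (m i) * x) * γ (m i) x) =
      (∏ i, c (m i)) * (Complex.exp (-Complex.I * (∑ i, φ (m i) : ℝ) * x) * ∏ i, γ (m i) x) := by
  rw [Finset.prod_mul_distrib, Finset.prod_mul_distrib, ← Complex.exp_sum, ← Finset.sum_mul,
    ← Finset.mul_sum, Complex.ofReal_sum]
  ring

lemma summable_mul_prod_snoc {J : ℕ} {c : ℕ → ℂ} (hc : Summable fun k => ‖c k‖)
    {r : (Fin J → ℕ) → ℝ} (hr : ∀ m, 0 ≤ r m)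
    (h : Summable fun m : Fin J → ℕ => ‖∏ i, c (m i)‖ * r m) :
    Summable fun m : Fin (J + 1) → ℕ => ‖∏ i, c (m i)‖ * r (fun i => m i.castSucc) := by
  rw [← (Fin.snocEquiv fun _ : Fin (J + 1) => ℕ).summable_iff]
  refine (hc.mul_of_nonneg h (fun _ => norm_nonneg _)
    fun m => mul_nonneg (norm_nonneg _) (hr m)).congr fun x => ?_
  simp only [Function.comp_apply, Fin.snocEquiv_apply, Fin.prod_univ_castSucc, Fin.snoc_castSucc,
    Fin.snoc_last, norm_mul]
  ring

lemma summable_prod_mul_fAux_zero {η : ℝ} (hη : 0 < η) {p J : ℕ} (hJ : J + 1 ≤ p) {c : ℕ → ℂ}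
    {φ : ℕ → ℝ} (hc : Summable fun k => ‖c k‖)
    (hh : Summable fun m : Fin (J + 1) → ℕ => ‖∏ i, c (m i)‖ * |hFun (J + 1) η (padFin (J + 1) φ m)|)
    (hres : ∀ m : Fin (J + 2) → ℕ, NonResonant η p (φ ∘ m)) :
    Summable fun m : Fin (J + 2) → ℕ =>
      ‖∏ i, c (m i)‖ * |fAux (J + 2) 0 η (zeroExtend (φ ∘ m))| := by
  have hsnoc := summable_mul_prod_snoc hc (fun _ => abs_nonneg _) hh
  have hperm : ∀ σ : Equiv.Perm (Fin (J + 2)), Summable fun m : Fin (J + 2) → ℕ =>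
      ‖∏ i, c (m i)‖ * |hFun (J + 1) η (zeroExtend (φ ∘ m ∘ σ))| := by
    intro σ
    refine ((Equiv.arrowCongr σ.symm (Equiv.refl ℕ)).summable_iff.mpr hsnoc).congr fun m => ?_
    have h1 : ∏ i, c ((m ∘ σ) i) = ∏ i, c (m i) := Equiv.prod_comp σ fun i => c (m i)
    have h2 : hFun (J + 1) η (padFin (J + 1) φ fun i => (m ∘ σ) i.castSucc) =
        hFun (J + 1) η (zeroExtend (φ ∘ m ∘ σ)) := by
      refine dependsOn_hFun _ _ fun i (hi : i < J + 1) => ?_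
      rw [padFin, dif_pos hi, zeroExtend_of_lt _ (hi.trans (Nat.lt_succ_self _))]
      rfl
    change ‖∏ i, c ((m ∘ σ) i)‖ *
      |hFun (J + 1) η (padFin (J + 1) φ fun i => (m ∘ σ) i.castSucc)| = _
    rw [h1, h2]
  refine Summable.of_nonneg_of_le (fun m => by positivity) (fun m => ?_)
    ((summable_sum (s := Finset.univ) fun σ _ => hperm σ).mul_left (η⁻¹ ^ (J + 2)))
  rw [← Finset.mul_sum, mul_left_comm]
  exact mul_le_mul_of_nonneg_left ((hres m).abs_fAux_zero_le hη hJ) (norm_nonneg _)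

lemma hasSum_integral_SFun0 {η : ℝ} {c : ℕ → ℂ} {φ : ℕ → ℝ} {γ : ℕ → ℝ → ℂ} {J : ℕ} {L : ℝ}
    (hsum : Summable fun m : Fin J → ℕ => ‖∏ i, c (m i)‖ * |fAux J 0 η (zeroExtend (φ ∘ m))|)
    (hL : ∀ k x, 0 < x → ‖γ k x‖ ≤ L)
    (hm : ∀ k, AEStronglyMeasurable (γ k) (volume.restrict (Set.Ioi 0))) {a b : ℝ} (ha : 0 ≤ a)
    (hab : a ≤ b) :
    HasSum (fun m : Fin J → ℕ => (fAux J 0 η (zeroExtend (φ ∘ m)) : ℂ) * (∏ i, c (m i)) *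
      ∫ x in a..b, Complex.exp (-Complex.I * (∑ i, φ (m i) : ℝ) * x) * ∏ i, γ (m i) x)
      (∫ x in a..b, SFun0 η c φ γ J x) := by
  have hIoc : Set.uIoc a b = Set.Ioc a b := Set.uIoc_of_le hab
  have hsub : Set.Ioc a b ⊆ Set.Ioi 0 := fun t ht => ha.trans_lt ht.1
  simp only [← intervalIntegral.integral_const_mul]
  have hnorm : ∀ (m : Fin J → ℕ) (t : ℝ), 0 < t →
      ‖(fAux J 0 η (zeroExtend (φ ∘ m)) : ℂ) * (∏ i, c (m i)) *
        (Complex.exp (-Complex.I * (∑ i, φ (m i) : ℝ) * t) * ∏ i, γ (m i) t)‖ ≤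
      ‖∏ i, c (m i)‖ * |fAux J 0 η (zeroExtend (φ ∘ m))| * L ^ J := by
    intro m t ht
    rw [norm_mul, norm_mul, norm_mul, norm_exp_neg_I_mul, one_mul, Complex.norm_real,
      Real.norm_eq_abs, mul_comm |_|, norm_prod (f := fun i => γ (m i) t)]
    gcongr
    exact (Finset.prod_le_prod (fun i _ => norm_nonneg _) fun i _ => hL (m i) t ht).trans_eq
      (by simp)
  refine intervalIntegral.hasSum_integral_of_dominated_convergence
    (fun m _ => ‖∏ i, c (m i)‖ * |fAux J 0 η (zeroExtend (φ ∘ m))| * L ^ J) (fun m => ?_)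
    (fun m => ?_) ?_ intervalIntegrable_const ?_
  · rw [hIoc]
    refine AEStronglyMeasurable.const_mul ?_ _
    exact (Continuous.aestronglyMeasurable (by fun_prop)).mul
      (Finset.aestronglyMeasurable_fun_prod _ fun i _ => (hm (m i)).mono_set hsub)
  · exact Filter.Eventually.of_forall fun t ht => hnorm m t (hsub (hIoc ▸ ht))
  · exact Filter.Eventually.of_forall fun t _ => hsum.mul_right _
  · refine Filter.Eventually.of_forall fun t ht => ?_
    have hs := (Summable.of_norm_bounded (hsum.mul_right (L ^ J))
      fun m => hnorm m t (hsub (hIoc ▸ ht))).hasSum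
    convert hs using 1
    refine tsum_congr fun m => ?_
    rw [prod_oscillation_eq, ← mul_assoc]
    rfl

lemma enorm_im_le_of_hasSum {ι : Type*} (e : Equiv.Perm ι) {F F' : ι → ℂ} {s : ℂ}
    (hF : HasSum F s) (hconj : ∀ i, starRingEnd ℂ (F (e i)) = F' i) {B : ι → ℝ≥0∞}
    (hB : ∀ i, ‖F i - F' i‖ₑ ≤ 2 * B i) :
    ENNReal.ofReal |s.im| ≤ ∑' i, B i := by
  have hF' : HasSum F' (starRingEnd ℂ s) := by
    rw [← funext hconj]
    exact Complex.hasSum_conj'.mpr (by simpa [Function.comp_def] using e.hasSum_iff.mpr hF)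
  have h2 : (2 : ℝ≥0∞) * ENNReal.ofReal |s.im| ≤ 2 * ∑' i, B i := by
    have hnorm : ‖s - starRingEnd ℂ s‖ₑ = 2 * ENNReal.ofReal |s.im| := by
      rw [Complex.sub_conj, ← ofReal_norm, norm_mul, Complex.norm_I, Complex.norm_real, mul_one,
        Real.norm_eq_abs, abs_mul, ENNReal.ofReal_mul (abs_nonneg _)]
      simp
    rw [← hnorm, ← (hF.sub hF').tsum_eq, ← ENNReal.tsum_mul_left]
    exact enorm_tsum_le_tsum_enorm.trans (ENNReal.tsum_le_tsum hB)
  exact (ENNReal.mul_le_mul_iff_right two_ne_zero ENNReal.ofNat_ne_top).mp h2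

theorem stmt12 (p : ℕ) (hp : 2 ≤ p) (η : ℝ) (hη : 0 < η)
    (c : ℕ → ℂ) (φ : ℕ → ℝ) (γ : ℕ → ℝ → ℂ)
    (V : ℝ → ℝ)
    (hV : ∀ x ∈ Set.Ioi (0:ℝ),
      (V x : ℂ) = ∑' k, c k * Complex.exp (-Complex.I * (φ k) * x) * γ k x)
    (hBV : ⨆ k, eVariationOn (γ k) (Set.Ioi 0) < ⊤)
    (hLp : ∫⁻ x in Set.Ioi (0:ℝ), (⨆ k, (‖γ k x‖₊ : ℝ≥0∞)) ^ p < ⊤)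
    (hc : Summable fun k => ‖c k‖)
    (hsd : ∀ j : ℕ, 1 ≤ j → j ≤ p - 1 →
      Summable fun m : Fin j → ℕ => ‖∏ i, c (m i)‖ * |hFun j η (padFin j φ m)|)
    (hres : ∀ K J : ℕ, 1 ≤ K → K ≤ J → J ≤ p → ∀ (m : Fin J → ℕ) (ε : Fin J → ℝ),
      (∀ i, ε i = 1 ∨ ε i = -1) → (K : ℝ) * η ≠ ∑ i, ε i * φ (m i))
    (hinv : ∃ star : ℕ → ℕ, Function.Involutive star ∧
      (∀ k, c (star k) = starRingEnd ℂ (c k)) ∧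
      (∀ k, φ (star k) = -φ k) ∧
      (∀ k, ∀ x ∈ Set.Ioi (0:ℝ), γ (star k) x = starRingEnd ℂ (γ k x)))
    (θ θ' : ℝ → ℝ)
    (hθAC : ∀ a b : ℝ, 0 < a → a ≤ b →
      IntervalIntegrable θ' volume a b ∧ θ b - θ a = ∫ x in a..b, θ' x)
    (hθ' : ∀ᵐ x ∂(volume.restrict (Set.Ioi (0:ℝ))),
      θ' x = (V x / η) * (Real.cos (η * x + 2 * θ x) - 1)) :
    ∀ J : ℕ, 2 ≤ J → J ≤ p → ∀ a b : ℝ, 0 ≤ a → a < b →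
      ENNReal.ofReal |(∫ x in a..b, SFun0 η c φ γ J x).im|
        ≤ calEFun η c φ J * (⨆ k, eVariationOn (γ k) (Set.Ioi 0)) ^ J := by
  obtain ⟨star, hstar, hcs, hφs, hγs⟩ := hinv
  set τ := ⨆ k, eVariationOn (γ k) (Set.Ioi 0) with hτ
  have hbv : ∀ k, BoundedVariationOn (γ k) (Set.Ioi 0) := fun k =>
    ((le_iSup (fun k => eVariationOn (γ k) (Set.Ioi 0)) k).trans_lt hBV).ne
  have hbound : ∀ k, TailBound (tailVariation (γ k)) (γ k) := fun k =>
    ⟨fun x hx => norm_le_tailVariation (hbv k) ((lintegral_mono fun x => by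
      gcongr
      exact le_iSup (fun k => (‖γ k x‖₊ : ℝ≥0∞)) k).trans_lt hLp) hx,
    fun x y hx hxy => norm_sub_le_tailVariation_sub (hbv k) hx hxy⟩
  have hτle : ∀ k x, 0 < x → tailVariation (γ k) x ≤ τ.toReal := fun k x hx =>
    (tailVariation_le (hbv k) hx).trans (ENNReal.toReal_mono hBV.ne
      (le_iSup (fun k => eVariationOn (γ k) (Set.Ioi 0)) k))
  have hmeas := fun k => aestronglyMeasurable_of_boundedVariationOn (hbv k)
  intro J hJ2 hJp a b ha hab
  obtain ⟨J, rfl⟩ := Nat.exists_eq_add_of_le' hJ2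
  have hnonres : ∀ m : Fin (J + 2) → ℕ, NonResonant η p (φ ∘ m) := by
    intro m K L hK hKL hL l
    simpa using hres K L hK hKL hL (m ∘ l) (fun _ => 1) fun _ => Or.inl rfl
  have hnonres' : ∀ m : Fin (J + 2) → ℕ, NonResonant η p (-(φ ∘ m)) := by
    intro m K L hK hKL hL l
    simpa using hres K L hK hKL hL (m ∘ l) (fun _ => -1) fun _ => Or.inr rfl
  have hsum := summable_prod_mul_fAux_zero hη (p := p) (J := J) (by omega) hc
    (hsd (J + 1) (by omega) (by omega)) hnonres
  have hS := hasSum_integral_SFun0 hsum (fun k x hx => ((hbound k).1 x hx).trans (hτle k x hx))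
    hmeas ha hab.le
  set A : (Fin (J + 2) → ℕ) → ℂ := fun m =>
    ∫ x in a..b, Complex.exp (-Complex.I * (∑ i, φ (m i) : ℝ) * x) * ∏ i, γ (m i) x with hA
  have hAstar : ∀ m, starRingEnd ℂ (A (star ∘ m)) = A m := by
    intro m
    simp only [hA]
    rw [intervalIntegral.integral_of_le hab.le, intervalIntegral.integral_of_le hab.le,
      ← integral_conj]
    refine setIntegral_congr_fun measurableSet_Ioc fun x hx => ?_
    have hx0 : x ∈ Set.Ioi (0 : ℝ) := ha.trans_lt hx.1
    rw [map_mul, map_prod, ← Complex.exp_conj]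
    congr 2
    · simp [hφs]
    · funext i
      simp [hγs _ x hx0]
  have hAle : ∀ m, ‖((∑ i, φ (m i) : ℝ) : ℂ) * A m‖ₑ ≤ 2 * τ ^ (J + 2) := by
    intro m
    have hW : ∀ x, 0 < x → ∏ i, tailVariation (γ (m i)) x ≤ τ.toReal ^ (J + 2) := fun x hx =>
      (Finset.prod_le_prod (fun i _ => ENNReal.toReal_nonneg)
        fun i _ => hτle (m i) x hx).trans_eq (by simp)
    have h := (TailBound.prod (s := Finset.univ) fun i _ => hbound (m i)).norm_mul_integral_le hW
      (Finset.aestronglyMeasurable_fun_prod _ fun i _ => hmeas (m i)) (∑ i, φ (m i)) ha hab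
    rw [← ofReal_norm]
    refine (ENNReal.ofReal_le_ofReal h).trans_eq ?_
    rw [ENNReal.ofReal_mul zero_le_two, ENNReal.ofReal_pow ENNReal.toReal_nonneg,
      ENNReal.ofReal_toReal hBV.ne, ENNReal.ofReal_ofNat]
  rw [calEFun, ← ENNReal.tsum_mul_right]
  refine enorm_im_le_of_hasSum (Equiv.arrowCongr (Equiv.refl _) hstar.toPerm) hS
    (F' := fun m => (fAux (J + 2) 0 η (zeroExtend (-(φ ∘ m))) : ℂ) * (∏ i, c (m i)) * A m)
    (fun m => ?_) fun m => ?_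
  · change starRingEnd ℂ ((fAux (J + 2) 0 η (zeroExtend (φ ∘ star ∘ m)) : ℂ) *
      (∏ i, c ((star ∘ m) i)) * A (star ∘ m)) = _
    have hφm : φ ∘ star ∘ m = -(φ ∘ m) := funext fun i => hφs (m i)
    rw [map_mul, map_mul, hAstar, Complex.conj_ofReal, hφm, map_prod]
    congr 2
    exact Finset.prod_congr rfl fun i _ => by simp [hcs]
  · have hodd := (hnonres m).fAux_zero_sub_neg (hnonres' m) hJp
    have heq : (fAux (J + 2) 0 η (zeroExtend (φ ∘ m)) : ℂ) * (∏ i, c (m i)) * A m -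
        (fAux (J + 2) 0 η (zeroExtend (-(φ ∘ m))) : ℂ) * (∏ i, c (m i)) * A m =
        -((∏ i, c (m i)) * (GFun (J + 2) η (padFin (J + 2) φ m) : ℂ) *
          (((∑ i, φ (m i) : ℝ) : ℂ) * A m)) := by
      rw [← sub_mul, ← sub_mul, ← Complex.ofReal_sub, hodd, Complex.ofReal_neg, Complex.ofReal_mul]
      simp only [Function.comp_apply]
      change _ = -((∏ i, c (m i)) * (GFun (J + 2) η (zeroExtend (φ ∘ m)) : ℂ) * _)
      ring
    rw [heq, enorm_neg, enorm_mul, enorm_mul]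
    refine (mul_le_mul_right (hAle m) _).trans_eq ?_
    simp only [enorm_eq_nnnorm, Complex.nnnorm_real]
    ring
end

section
/- Let α ∈ (0,1], let j ≥ 1 be an integer, let (c_k)_{k≥1} be complex numbers with Σ_{k=1}^∞ |c_k|^α < ∞, and let (φ_k)_{k≥1} be real numbers. Then the set T of all η ∈ ℝ such that either η = φ_{k_1} + ⋯ + φ_{k_i} for some 1 ≤ i ≤ j and some indices k_1,…,k_i ≥ 1, or Σ_{k_1,…,k_j=1}^∞ | c_{k_1} ⋯ c_{k_j} h_j(η; φ_{k_1},…,φ_{k_j}) | = ∞, has Hausdorff dimension at most jα. -/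
open scoped BigOperators ENNReal
open MeasureTheory

open Filter Topology

/-- The mass, with weights `a m` at the points `ψ m`, of the dyadic interval with index
`k` of length `2⁻ⁿ` together with its two neighbours. -/
noncomputable def dyadicMass {ι : Type*} (a ψ : ι → ℝ) (n : ℕ) (k : ℤ) : ℝ≥0∞ :=
  ∑' m, if |⌊ψ m * 2 ^ n⌋ - k| ≤ 1 then ENNReal.ofReal (a m) else 0

theorem tsum_dyadicMass {ι : Type*} (a ψ : ι → ℝ) (n : ℕ) :
    ∑' k, dyadicMass a ψ n k = 3 * ∑' m, ENNReal.ofReal (a m) := by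
  unfold dyadicMass
  rw [ENNReal.tsum_comm, ← ENNReal.tsum_mul_left]
  refine tsum_congr fun m => ?_
  set q := ⌊ψ m * 2 ^ n⌋
  rw [tsum_eq_sum (s := Finset.Icc (q - 1) (q + 1))]
  · rw [Finset.sum_congr rfl (g := fun _ => ENNReal.ofReal (a m))]
    · have : (q + 1 + 1 - (q - 1)).toNat = 3 := by omega
      simp [this]
    · intro k hk
      rw [Finset.mem_Icc] at hk
      rw [if_pos (abs_le.2 (by omega))]
  · intro k hk
    rw [Finset.mem_Icc] at hk
    rw [if_neg fun h => hk (by rw [abs_le] at h; omega)]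

theorem abs_floor_mul_two_pow_sub_le {x y : ℝ} {n : ℕ} (h : |x - y| ≤ (1 / 2) ^ n) :
    |⌊y * 2 ^ n⌋ - ⌊x * 2 ^ n⌋| ≤ 1 := by
  have h2 : (0 : ℝ) < 2 ^ n := by positivity
  have h1 : |x * 2 ^ n - y * 2 ^ n| ≤ 1 := by
    rw [← sub_mul, abs_mul, abs_of_pos h2]
    calc |x - y| * 2 ^ n ≤ (1 / 2) ^ n * 2 ^ n := by gcongr
      _ = 1 := by rw [← mul_pow]; norm_num
  rw [abs_le] at h1
  have hx := Int.floor_le (x * 2 ^ n)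
  have hx' := Int.lt_floor_add_one (x * 2 ^ n)
  have hy := Int.floor_le (y * 2 ^ n)
  have hy' := Int.lt_floor_add_one (y * 2 ^ n)
  have e1 : ⌊y * 2 ^ n⌋ < ⌊x * 2 ^ n⌋ + 2 := by
    have : (⌊y * 2 ^ n⌋ : ℝ) < ⌊x * 2 ^ n⌋ + 2 := by linarith
    exact_mod_cast this
  have e2 : ⌊x * 2 ^ n⌋ < ⌊y * 2 ^ n⌋ + 2 := by
    have : (⌊x * 2 ^ n⌋ : ℝ) < ⌊y * 2 ^ n⌋ + 2 := by linarith
    exact_mod_cast this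
  rw [abs_le]
  omega

theorem ediam_dyadic_le (n : ℕ) (k : ℤ) :
    Metric.ediam {x : ℝ | ⌊x * 2 ^ n⌋ = k} ≤ ENNReal.ofReal ((1 / 2) ^ n) := by
  refine Metric.ediam_le_of_forall_dist_le fun x hx y hy => ?_
  have h := (Int.abs_sub_lt_one_of_floor_eq_floor (hx.trans (Eq.symm hy))).le
  have h2 : (0 : ℝ) < 2 ^ n := by positivity
  rw [← sub_mul, abs_mul, abs_of_pos h2] at h
  rw [Real.dist_eq, div_pow, one_pow]
  exact (le_div_iff₀ h2).2 h

/-- Dyadic decomposition of a negative power. -/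
theorem ofReal_inv_rpow_le {t : ℝ} (ht : 0 < t) {x : ℝ} (hx : 0 ≤ x) (N : ℕ) :
    ENNReal.ofReal (x⁻¹ ^ t) ≤ ENNReal.ofReal ((2 ^ t) ^ N) +
      ∑' n : ℕ, if x ≤ (1 / 2) ^ (n + N) then ENNReal.ofReal ((2 ^ t) ^ (n + N + 1)) else 0 := by
  have key : ∀ n : ℕ, (1 / 2) ^ n ≤ x → x⁻¹ ^ t ≤ (2 ^ t) ^ n := by
    intro n hn
    rw [Real.rpow_pow_comm (by norm_num)]
    refine Real.rpow_le_rpow (by positivity) ?_ ht.le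
    rw [show (2 : ℝ) ^ n = ((1 / 2) ^ n)⁻¹ by simp]
    exact inv_anti₀ (by positivity) hn
  rcases hx.eq_or_lt with rfl | hx
  · simp [Real.zero_rpow ht.ne']
  rcases le_or_gt x ((1 / 2) ^ N) with h | h
  · obtain ⟨n, hn1, hn2⟩ := exists_nat_pow_near_of_lt_one hx
      (h.trans (pow_le_one₀ (by norm_num) (by norm_num))) (by norm_num : (0 : ℝ) < 1 / 2)
      (by norm_num)
    have hNn : N ≤ n := by
      have := hn1.trans_le h
      rw [pow_lt_pow_iff_right_of_lt_one₀ (by norm_num) (by norm_num)] at this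
      omega
    refine le_add_left (le_trans ?_ (ENNReal.le_tsum (n - N)))
    rw [Nat.sub_add_cancel hNn, if_pos hn2]
    exact ENNReal.ofReal_le_ofReal (key _ hn1.le)
  · exact le_add_right (ENNReal.ofReal_le_ofReal (key _ h.le))

theorem summable_of_dyadicMass_le {ι : Type*} {a ψ : ι → ℝ} (ha : ∀ m, 0 ≤ a m) (has : Summable a)
    {t r : ℝ} (ht : 0 < t) (htr : t < r) {η : ℝ} {N : ℕ}
    (h : ∀ n, N ≤ n → dyadicMass a ψ n ⌊η * 2 ^ n⌋ ≤ ENNReal.ofReal (((1 / 2) ^ r) ^ n)) :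
    Summable fun m => a m * |η - ψ m|⁻¹ ^ t := by
  have h0 : ∀ m, 0 ≤ a m * |η - ψ m|⁻¹ ^ t := fun m =>
    mul_nonneg (ha m) (Real.rpow_nonneg (by positivity) _)
  have hA : ∑' m, ENNReal.ofReal (a m) ≠ ∞ := has.tsum_ofReal_ne_top
  set q : ℝ := 2 ^ t * (1 / 2) ^ r with hq
  have hq0 : 0 ≤ q := by positivity
  have hq1 : q < 1 := by
    rw [hq, one_div, Real.inv_rpow (by norm_num), ← div_eq_mul_inv, div_lt_one (by positivity)]
    exact Real.rpow_lt_rpow_of_exponent_lt (by norm_num) htr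
  suffices H : ∑' m, ENNReal.ofReal (a m * |η - ψ m|⁻¹ ^ t) ≠ ∞ by
    have := ENNReal.summable_toReal H
    simpa only [ENNReal.toReal_ofReal (h0 _)] using this
  have hg : Summable fun n : ℕ => (2 ^ t * q ^ N) * q ^ n :=
    (summable_geometric_of_lt_one hq0 hq1).mul_left _
  refine ne_top_of_le_ne_top (ENNReal.add_ne_top.2
    ⟨ENNReal.mul_ne_top hA (ENNReal.ofReal_ne_top (r := (2 ^ t) ^ N)), hg.tsum_ofReal_ne_top⟩) ?_
  calc ∑' m, ENNReal.ofReal (a m * |η - ψ m|⁻¹ ^ t)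
      ≤ ∑' m, (ENNReal.ofReal (a m) * ENNReal.ofReal ((2 ^ t) ^ N) +
          ∑' n : ℕ, ENNReal.ofReal ((2 ^ t) ^ (n + N + 1)) *
            (if |⌊ψ m * 2 ^ (n + N)⌋ - ⌊η * 2 ^ (n + N)⌋| ≤ 1 then ENNReal.ofReal (a m)
              else 0)) := by
        refine ENNReal.tsum_le_tsum fun m => ?_
        rw [ENNReal.ofReal_mul (ha m)]
        refine (mul_le_mul_right (ofReal_inv_rpow_le ht (abs_nonneg _) N) _).trans ?_
        rw [mul_add, ← ENNReal.tsum_mul_left]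
        refine add_le_add_right (ENNReal.tsum_le_tsum fun n => ?_) _
        split_ifs with h1 h2 h2
        · rw [mul_comm]
        · exact absurd (abs_floor_mul_two_pow_sub_le h1) h2
        · simp
        · simp
    _ = (∑' m, ENNReal.ofReal (a m)) * ENNReal.ofReal ((2 ^ t) ^ N) +
          ∑' n : ℕ, ENNReal.ofReal ((2 ^ t) ^ (n + N + 1)) *
            dyadicMass a ψ (n + N) ⌊η * 2 ^ (n + N)⌋ := by
        rw [ENNReal.tsum_add, ENNReal.tsum_mul_right, ENNReal.tsum_comm]
        simp_rw [ENNReal.tsum_mul_left, dyadicMass]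
    _ ≤ _ := by
        gcongr with n
        refine (mul_le_mul_right (h _ (Nat.le_add_left _ _)) _).trans_eq ?_
        rw [← ENNReal.ofReal_mul (by positivity), hq]
        congr 1
        ring

/-- The set where a Riesz-type potential of order `t` of a finite atomic measure diverges has
Hausdorff dimension at most `t`. -/
theorem dimH_not_summable_le {ι : Type*} {a ψ : ι → ℝ} (ha : ∀ m, 0 ≤ a m) (has : Summable a)
    {t : ℝ} (ht : 0 < t) :
    dimH {η : ℝ | ¬ Summable fun m => a m * |η - ψ m|⁻¹ ^ t} ≤ ENNReal.ofReal t := by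
  refine le_of_forall_gt_imp_ge_of_dense fun d hd => ?_
  rcases eq_or_ne d ∞ with rfl | hdt
  · exact le_top
  lift d to NNReal using hdt
  have hts : t < d := by
    rwa [← ENNReal.ofReal_coe_nnreal, ENNReal.ofReal_lt_ofReal_iff_of_nonneg ht.le] at hd
  obtain ⟨r, htr, hrd⟩ := exists_between hts
  have hd0 : (0 : ℝ) < d := ht.trans hts
  refine dimH_le_of_hausdorffMeasure_ne_top ?_
  have hA : ∑' m, ENNReal.ofReal (a m) ≠ ∞ := has.tsum_ofReal_ne_top
  set q : ℝ := 2 ^ r * (1 / 2) ^ (d : ℝ) with hq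
  have hq0 : 0 ≤ q := by positivity
  have hq1 : q < 1 := by
    rw [hq, one_div, Real.inv_rpow (by norm_num), ← div_eq_mul_inv, div_lt_one (by positivity)]
    exact Real.rpow_lt_rpow_of_exponent_lt (by norm_num) hrd
  have hg : Summable fun n : ℕ => q ^ n := summable_geometric_of_lt_one hq0 hq1
  let bad : ℕ → ℤ → Prop := fun n k => ENNReal.ofReal (((1 / 2) ^ r) ^ n) < dyadicMass a ψ n k
  let U : ℕ → ℕ × ℤ → Set ℝ := fun N i =>
    {x : ℝ | ⌊x * 2 ^ (i.1 + N)⌋ = i.2 ∧ bad (i.1 + N) i.2}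
  have hdiam : ∀ N i, Metric.ediam (U N i) ≤ ENNReal.ofReal ((1 / 2) ^ (i.1 + N)) := fun N i =>
    (Metric.ediam_mono fun x hx => hx.1).trans (ediam_dyadic_le _ _)
  have hpow : ∀ N i, Metric.ediam (U N i) ^ (d : ℝ) ≤
      ENNReal.ofReal (q ^ (i.1 + N)) * dyadicMass a ψ (i.1 + N) i.2 := by
    intro N i
    by_cases hb : bad (i.1 + N) i.2
    · calc Metric.ediam (U N i) ^ (d : ℝ)
          ≤ ENNReal.ofReal ((1 / 2) ^ (i.1 + N)) ^ (d : ℝ) := by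
            gcongr; exact hdiam N i
        _ = ENNReal.ofReal (q ^ (i.1 + N)) * ENNReal.ofReal (((1 / 2) ^ r) ^ (i.1 + N)) := by
            rw [← ENNReal.ofReal_mul (by positivity),
              ENNReal.ofReal_rpow_of_nonneg (by positivity) hd0.le, hq, ← mul_pow,
              ← Real.rpow_pow_comm (by norm_num), mul_right_comm,
              ← Real.mul_rpow (by norm_num) (by norm_num)]
            norm_num
        _ ≤ _ := by gcongr
    · have : U N i = ∅ := Set.eq_empty_of_forall_notMem fun x hx => hb hx.2
      rw [this, Metric.ediam_empty, ENNReal.zero_rpow_of_pos hd0]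
      exact zero_le
  have hbound : ∀ N, ∑' i, Metric.ediam (U N i) ^ (d : ℝ) ≤
      (∑' n : ℕ, ENNReal.ofReal (q ^ n)) * (3 * ∑' m, ENNReal.ofReal (a m)) := by
    intro N
    refine (ENNReal.tsum_le_tsum (hpow N)).trans ?_
    rw [ENNReal.tsum_prod (f := fun n k =>
      ENNReal.ofReal (q ^ (n + N)) * dyadicMass a ψ (n + N) k)]
    simp_rw [ENNReal.tsum_mul_left, tsum_dyadicMass]
    rw [ENNReal.tsum_mul_right]
    gcongr ?_ * _
    exact ENNReal.tsum_comp_le_tsum_of_injective (add_left_injective N)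
      fun n => ENNReal.ofReal (q ^ n)
  have hr : Tendsto (fun N : ℕ => ENNReal.ofReal ((1 / 2) ^ N)) atTop (𝓝 0) := by
    rw [← ENNReal.ofReal_zero]
    exact ENNReal.tendsto_ofReal
      (tendsto_pow_atTop_nhds_zero_of_lt_one (by norm_num) (by norm_num))
  have hmain := Measure.hausdorffMeasure_le_liminf_tsum (d : ℝ)
    {η : ℝ | ¬ Summable fun m => a m * |η - ψ m|⁻¹ ^ t} _ hr U
    (Eventually.of_forall fun N i => (hdiam N i).trans (ENNReal.ofReal_le_ofReal
      (pow_le_pow_of_le_one (by norm_num) (by norm_num) (Nat.le_add_left _ _))))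
    (Eventually.of_forall fun N η hη => by
      obtain ⟨n, hn, hb⟩ : ∃ n, N ≤ n ∧ bad n ⌊η * 2 ^ n⌋ := by
        by_contra! H
        exact hη (summable_of_dyadicMass_le ha has ht htr fun n hn => not_lt.1 (H n hn))
      refine Set.mem_iUnion.2 ⟨(n - N, ⌊η * 2 ^ n⌋), ?_⟩
      simp only [U, Set.mem_ofPred_eq, Nat.sub_add_cancel hn]
      exact ⟨trivial, hb⟩)
  refine ne_top_of_le_ne_top ?_ (hmain.trans ((liminf_le_liminf
    (Eventually.of_forall hbound)).trans_eq (liminf_const _)))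
  exact ENNReal.mul_ne_top hg.tsum_ofReal_ne_top (ENNReal.mul_ne_top (by norm_num) hA)

theorem summable_prod_fin {f : ℕ → ℝ} (hf0 : ∀ k, 0 ≤ f k) (hf : Summable f) (n : ℕ) :
    Summable fun m : Fin n → ℕ => ∏ i, f (m i) := by
  induction n with
  | zero => exact Summable.of_finite
  | succ n ih =>
    rw [← (Fin.insertNthEquiv (fun _ => ℕ) 0).summable_iff]
    refine (hf.mul_of_nonneg ih hf0 fun m => Finset.prod_nonneg fun i _ => hf0 _).congr fun p => ?_
    simp [Fin.prod_univ_succ]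

theorem abs_hFun_le (J : ℕ) {η : ℝ} {φ : ℕ → ℝ} {M : ℝ}
    (h : ∀ a b, a < b → b ≤ J → |η - ∑ i ∈ Finset.Ico a b, φ i|⁻¹ ≤ M) :
    |hFun J η φ| ≤ catalan J * M ^ J := by
  induction J using Nat.strong_induction_on generalizing φ with
  | _ J ih =>
  cases J with
  | zero => simp [hFun]
  | succ J =>
    have hM : 0 ≤ M := (by positivity : (0 : ℝ) ≤ _).trans (h 0 1 one_pos (by omega))
    have h0 : |η - ∑ i ∈ Finset.range (J + 1), φ i|⁻¹ ≤ M := by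
      rw [← Nat.Ico_zero_eq_range]
      exact h 0 (J + 1) (Nat.succ_pos _) le_rfl
    rw [hFun, Finset.sum_attach (Finset.range (J + 1))
      (fun j => hFun j η φ * hFun (J - j) η fun i => φ (i + j)), abs_mul, abs_inv]
    have hsum : |∑ j ∈ Finset.range (J + 1), hFun j η φ * hFun (J - j) η fun i => φ (i + j)| ≤
        catalan (J + 1) * M ^ J := by
      rw [catalan_succ, Fin.sum_univ_eq_sum_range (fun i => catalan i * catalan (J - i)),
        Nat.cast_sum, Finset.sum_mul]
      refine (Finset.abs_sum_le_sum_abs _ _).trans (Finset.sum_le_sum fun j hj => ?_)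
      have hj : j ≤ J := by simpa [Nat.lt_succ_iff] using hj
      rw [abs_mul, Nat.cast_mul]
      calc |hFun j η φ| * |hFun (J - j) η fun i => φ (i + j)|
          ≤ (catalan j * M ^ j) * (catalan (J - j) * M ^ (J - j)) := by
            refine mul_le_mul (ih j (by omega) fun a b hab hb => h a b hab (by omega))
              (ih (J - j) (by omega) fun a b hab hb => ?_) (abs_nonneg _) (by positivity)
            have := h (a + j) (b + j) (by omega) (by omega)
            rwa [← Finset.sum_Ico_add' φ a b j] at this
        _ = catalan j * catalan (J - j) * M ^ J := by
            rw [mul_mul_mul_comm, ← pow_add, Nat.add_sub_cancel' hj]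
    calc _ ≤ M * (catalan (J + 1) * M ^ J) := by gcongr
      _ = _ := by ring

theorem abs_hFun_rpow_le {J : ℕ} (hJ : 1 ≤ J) {α : ℝ} (hα : 0 ≤ α) (η : ℝ) (φ : ℕ → ℝ) :
    |hFun J η φ| ^ α ≤ catalan J ^ α *
      ∑ p ∈ (Finset.range (J + 1) ×ˢ Finset.range (J + 1)).filter (fun p => p.1 < p.2),
        |η - ∑ i ∈ Finset.Ico p.1 p.2, φ i|⁻¹ ^ (J * α) := by
  set P := (Finset.range (J + 1) ×ˢ Finset.range (J + 1)).filter (fun p => p.1 < p.2) with hP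
  have hne : P.Nonempty := ⟨(0, 1), by simp [hP]; omega⟩
  obtain ⟨p, hp, hmax⟩ := P.exists_max_image
    (fun p => |η - ∑ i ∈ Finset.Ico p.1 p.2, φ i|⁻¹) hne
  set M := |η - ∑ i ∈ Finset.Ico p.1 p.2, φ i|⁻¹ with hMdef
  have hM : 0 ≤ M := by positivity
  have hle : |hFun J η φ| ≤ catalan J * M ^ J := abs_hFun_le J fun a b hab hb =>
    hmax (a, b) (by simp [hP]; omega)
  calc |hFun J η φ| ^ α ≤ (catalan J * M ^ J) ^ α := by gcongr
    _ = catalan J ^ α * M ^ (J * α) := by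
      rw [Real.mul_rpow (by positivity) (by positivity), Real.rpow_mul hM, Real.rpow_natCast]
    _ ≤ _ := by
      gcongr
      exact Finset.single_le_sum
        (f := fun p : ℕ × ℕ => |η - ∑ i ∈ Finset.Ico p.1 p.2, φ i|⁻¹ ^ (J * α))
        (fun _ _ => by positivity) hp

theorem Summable.of_rpow {ι : Type*} {f : ι → ℝ} {α : ℝ} (hα0 : 0 < α) (hα1 : α ≤ 1)
    (hf0 : ∀ i, 0 ≤ f i) (hf : Summable fun i => f i ^ α) : Summable f := by
  refine Summable.of_norm_bounded_eventually hf ?_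
  filter_upwards [hf.tendsto_cofinite_zero.eventually_le_const one_pos] with i hi
  have h1 : f i ≤ 1 := by
    by_contra! h
    exact absurd (Real.one_lt_rpow h hα0) (not_lt.2 hi)
  rw [Real.norm_of_nonneg (hf0 i)]
  exact Real.self_le_rpow_of_le_one (hf0 i) h1 hα1

theorem stmt15 (α : ℝ) (hα0 : 0 < α) (hα1 : α ≤ 1) (j : ℕ) (hj : 1 ≤ j)
    (c : ℕ → ℂ) (hc : Summable fun k => ‖c k‖ ^ α) (φ : ℕ → ℝ) :
    dimH {η : ℝ |
        (∃ i : ℕ, 1 ≤ i ∧ i ≤ j ∧ ∃ m : Fin i → ℕ, η = ∑ i', φ (m i')) ∨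
        ¬ Summable fun m : Fin j → ℕ =>
            ‖∏ i, c (m i)‖ * |hFun j η (padFin j φ m)|}
      ≤ ENNReal.ofReal ((j : ℝ) * α) := by
  have ht : 0 < (j : ℝ) * α := mul_pos (by exact_mod_cast hj) hα0
  set a : (Fin j → ℕ) → ℝ := fun m => ∏ i, ‖c (m i)‖ ^ α
  have ha0 : ∀ m, 0 ≤ a m := fun m => Finset.prod_nonneg fun i _ => by positivity
  have has : Summable a := summable_prod_fin (fun k => by positivity) hc j
  let P := (Finset.range (j + 1) ×ˢ Finset.range (j + 1)).filter (fun p => p.1 < p.2)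
  let ψ : ℕ × ℕ → (Fin j → ℕ) → ℝ := fun p m => ∑ i ∈ Finset.Ico p.1 p.2, padFin j φ m i
  let S : Set ℝ := ⋃ i : ℕ, Set.range fun m : Fin i → ℕ => ∑ i', φ (m i')
  let E : ℕ × ℕ → Set ℝ := fun p => {η | ¬ Summable fun m => a m * |η - ψ p m|⁻¹ ^ (j * α)}
  have hS : dimH S = 0 := dimH_countable (Set.countable_iUnion fun i => Set.countable_range _)
  refine (dimH_mono (t := S ∪ ⋃ p, E p) ?_).trans ?_
  · rintro η (⟨i, -, -, m, rfl⟩ | hη)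
    · exact Or.inl (Set.mem_iUnion.2 ⟨i, m, rfl⟩)
    · refine Or.inr ?_
      by_contra hE
      simp only [E, Set.mem_iUnion, Set.mem_ofPred_eq, not_exists, not_not] at hE
      refine hη (Summable.of_rpow hα0 hα1 (fun m => by positivity) ?_)
      refine Summable.of_nonneg_of_le (fun m => by positivity) (fun m => ?_)
        ((summable_sum fun p (_ : p ∈ P) => hE p).mul_left ((catalan j : ℝ) ^ α))
      rw [Real.mul_rpow (by positivity) (by positivity), norm_prod,
        ← Real.finsetProd_rpow _ _ fun i _ => norm_nonneg _]
      refine (mul_le_mul_of_nonneg_left (abs_hFun_rpow_le hj hα0.le η _) (ha0 m)).trans_eq ?_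
      rw [mul_left_comm, Finset.mul_sum]
  · rw [dimH_union, hS, dimH_iUnion]
    exact max_le (zero_le) (iSup_le fun p => dimH_not_summable_le ha0 has ht)
end
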